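/- arXiv:1401.1657 — 4 statements merged into one kernel-verified Lean document; each statement's English description precedes it below -/
import Mathlib

section
/- Let D ⊆ ℂⁿ be a bounded balanced pseudoconvex domain and let f : 𝔻 → D be a weak m-extremal with respect to distinct points λ₁,…,λ_m ∈ 𝔻. For λ_{m+1} ∈ 𝔻 distinct from λ₁,…,λ_m, the map g(λ) := m_{λ_{m+1}}(λ)·f(λ) is a weak (m+1)-extremal with respect to λ₁,…,λ_{m+1}. -/
open Complex Metric Set

noncomputable section

/-- The open unit disc in `ℂ`. -/
def 𝔻 : Set ℂ := Metric.ball 0 1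

/-- `B` is a Blaschke product of degree `m` on the unit disc: a unimodular constant
times a product of `m` Möbius factors. -/
def IsBlaschke (m : ℕ) (B : ℂ → ℂ) : Prop :=
  ∃ (ω : ℂ) (a : Fin m → ℂ), ‖ω‖ = 1 ∧ (∀ j, a j ∈ 𝔻) ∧
    ∀ z ∈ 𝔻, B z = ω * ∏ j, (a j - z) / (1 - (starRingEnd ℂ) (a j) * z)

variable {E : Type*} [NormedAddCommGroup E] [NormedSpace ℂ E]

/-- The interpolation data `lam j ↦ f (lam j)` is extremally solvable (through `f`):
no map holomorphic on a neighbourhood of the closed unit disc with values in `D`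
interpolates `f` at the points `lam j`. -/
def ExtSolv (D : Set E) {m : ℕ} (lam : Fin m → ℂ) (f : ℂ → E) : Prop :=
  ¬ ∃ (U : Set ℂ) (g : ℂ → E), IsOpen U ∧ Metric.closedBall (0 : ℂ) 1 ⊆ U ∧
      DifferentiableOn ℂ g U ∧ (∀ z ∈ U, g z ∈ D) ∧ ∀ j, g (lam j) = f (lam j)

/-- `f : 𝔻 → D` is a weak `m`-extremal with respect to the distinct points `lam`. -/
def IsWeakExtremal (D : Set E) {m : ℕ} (lam : Fin m → ℂ) (f : ℂ → E) : Prop :=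
  DifferentiableOn ℂ f 𝔻 ∧ (∀ z ∈ 𝔻, f z ∈ D) ∧ ExtSolv D lam f

/-- `f : 𝔻 → D` is `m`-extremal: for all choices of `m` distinct points of `𝔻` the
corresponding interpolation data is extremally solvable. -/
def IsMExtremal (D : Set E) (m : ℕ) (f : ℂ → E) : Prop :=
  DifferentiableOn ℂ f 𝔻 ∧ (∀ z ∈ 𝔻, f z ∈ D) ∧
    ∀ lam : Fin m → ℂ, Function.Injective lam → (∀ j, lam j ∈ 𝔻) → ExtSolv D lam f

/-- The Minkowski functional of a set `D`. -/
def mink (D : Set E) (z : E) : ℝ := sInf {t : ℝ | 0 < t ∧ ((t : ℂ))⁻¹ • z ∈ D}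

/-- `φ` is a holomorphic automorphism of `D`. -/
def IsAutomorphismOf (D : Set E) (φ : E → E) : Prop :=
  DifferentiableOn ℂ φ D ∧ Set.MapsTo φ D D ∧
    ∃ ψ : E → E, DifferentiableOn ℂ ψ D ∧ Set.MapsTo ψ D D ∧
      (∀ z ∈ D, ψ (φ z) = z) ∧ (∀ z ∈ D, φ (ψ z) = z)

/-- The group of holomorphic automorphisms of `D` acts transitively. -/
def Homogeneous (D : Set E) : Prop :=
  ∀ z ∈ D, ∀ w ∈ D, ∃ φ : E → E, IsAutomorphismOf D φ ∧ φ z = w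

/-- `f` is an `m`-complex geodesic of `D`: there is `F ∈ 𝒪(D, 𝔻)` such that `F ∘ f` is a
non-constant Blaschke product of degree at most `m - 1`. -/
def IsComplexGeodesicOfOrder (D : Set E) (m : ℕ) (f : ℂ → E) : Prop :=
  DifferentiableOn ℂ f 𝔻 ∧ (∀ z ∈ 𝔻, f z ∈ D) ∧
    ∃ F : E → ℂ, DifferentiableOn ℂ F D ∧ (∀ z ∈ D, F z ∈ 𝔻) ∧
      ∃ k : ℕ, 1 ≤ k ∧ k ≤ m - 1 ∧ ∃ B : ℂ → ℂ, IsBlaschke k B ∧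
        ∀ z ∈ 𝔻, F (f z) = B z

/-- The sub-mean-value property on circles, for a real function on a subset of `ℂ`. -/
def SubmeanOn (u : ℂ → ℝ) (S : Set ℂ) : Prop :=
  ∀ (c : ℂ) (r : ℝ), 0 < r → Metric.closedBall c r ⊆ S →
    u c ≤ (2 * Real.pi)⁻¹ * ∫ θ in (0:ℝ)..(2 * Real.pi), u (c + r * Complex.exp (θ * Complex.I))

/-- `u` is plurisubharmonic on `D`: upper semicontinuous and submean on every complex line. -/
def PlurisubharmonicOn (u : E → ℝ) (D : Set E) : Prop :=
  UpperSemicontinuousOn u D ∧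
    ∀ (z v : E), SubmeanOn (fun w : ℂ => u (z + w • v)) {w : ℂ | z + w • v ∈ D}

/-- Hartogs pseudoconvexity: `- log dist(·, ∂D)` is plurisubharmonic on `D`. -/
def IsPseudoconvex (D : Set E) : Prop :=
  PlurisubharmonicOn (fun z => - Real.log (Metric.infDist z Dᶜ)) D

/-!
If a holomorphic `h` with values in `D` interpolated `m_α f` at all `m + 1` points, where
`α = λ_{m+1}`, it would vanish at `α`, so `h = m_α φ` with `φ` holomorphic. Since `|m_α| = 1` on the
circle and `D` is balanced, `φ` maps the circle into `D`; if `φ` maps the whole closed disc into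
`D`, it interpolates `f` at the first `m` points, contradicting the extremality of `f`.

The discs `t φ`, `0 ≤ t ≤ 1`, join `φ` to the constant `0` and have boundaries in `D`, so the
continuity principle keeps them all in `D`: their distance to the complement of `D` is at least that
of their boundaries, by the maximum principle for `-log dist(·, ∂D)` along analytic discs.

Plurisubharmonicity only controls this function along complex lines. It is mollified to a `C¹`
function that satisfies the submean inequality along the tangent line of the disc at each point. A
disc differs from its tangent line by a holomorphic map vanishing to second order, so up to `o(r²)`
the average over a circle of radius `r` does not change, and an `o(r²)` defect in the submean
inequality does not affect the maximum principle.
-/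

section MaximumPrinciple

open Filter Topology Asymptotics Real

/-- Nonnegativity at `z` of the lower generalized Laplacian
`liminf_{r → 0} 4 (circleAverage g z r - g z) / r²` of Blaschke and Privalov: a weakening of the
sub-mean-value inequality which still forces the maximum principle. -/
def LowerLaplacianNonnegAt (g : ℂ → ℝ) (z : ℂ) : Prop :=
  ∀ η > 0, ∀ᶠ r in 𝓝[>] (0 : ℝ), g z - η * r ^ 2 ≤ circleAverage g z r

/-- The local sub-mean value inequality at `x` on every complex line through `x`, the pointwise
form of plurisubharmonicity. -/
def LinewiseSubmeanAt (v : E → ℝ) (x : E) : Prop :=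
  ∀ a : E, ∀ᶠ r in 𝓝[>] (0 : ℝ), v x ≤ circleAverage (fun w : ℂ => v (x + w • a)) 0 r

lemma circleAverage_clm_comp_of_differentiableOn [CompleteSpace E] {F : Type*}
    [NormedAddCommGroup F] [NormedSpace ℝ F] [CompleteSpace F] (L : E →L[ℝ] F) {f : ℂ → E} {c : ℂ}
    {r : ℝ} (hf : DifferentiableOn ℂ f (closedBall c |r|)) :
    circleAverage (fun z => L (f z)) c r = L (f c) := by
  have hint : CircleIntegrable f c r :=
    (hf.continuousOn.mono sphere_subset_closedBall).circleIntegrable'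
  rw [← (hf.diffContOnCl_ball subset_rfl).circleAverage, ← L.circleAverage_comp_comm hint,
    Function.comp_def]

lemma circleAverage_norm_sq (c : ℂ) (r : ℝ) :
    circleAverage (fun z => ‖z‖ ^ 2) c r = ‖c‖ ^ 2 + r ^ 2 := by
  have hsphere : EqOn (fun z : ℂ => ‖z‖ ^ 2)
      (fun z => ‖c‖ ^ 2 + r ^ 2 + reCLM (2 * (starRingEnd ℂ) c * (z - c))) (sphere c |r|) := by
    intro z hz
    have hr : ‖z - c‖ ^ 2 = r ^ 2 := by rw [mem_sphere_iff_norm.1 hz, sq_abs]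
    simp only [← hr, ← normSq_eq_norm_sq, normSq_apply, reCLM_apply, mul_re, sub_re, sub_im,
      conj_re, conj_im, mul_im, re_ofNat, im_ofNat]
    ring
  have hmean : circleAverage (fun z => reCLM (2 * (starRingEnd ℂ) c * (z - c))) c r = 0 := by
    rw [circleAverage_clm_comp_of_differentiableOn reCLM (by fun_prop)]
    simp
  rw [circleAverage_congr_sphere hsphere, circleAverage_fun_add, hmean, circleAverage_const,
    add_zero]
  · exact circleIntegrable_const _ _ _
  · exact (by fun_prop : Continuous _).continuousOn.circleIntegrable'

lemma eventually_closedBall_abs_subset {z : ℂ} {s : Set ℂ} (hs : s ∈ 𝓝 z) :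
    ∀ᶠ r in 𝓝[>] (0 : ℝ), closedBall z |r| ⊆ s :=
  ((continuous_abs.tendsto' 0 0 abs_zero).eventually (eventually_closedBall_subset hs)).filter_mono
    nhdsWithin_le_nhds

lemma circleAverage_le_sub_of_forall_sphere {g : ℂ → ℝ} {c : ℂ} {r η : ℝ}
    (hg : ContinuousOn g (sphere c |r|))
    (hmax : ∀ z ∈ sphere c |r|, g z + η * ‖z‖ ^ 2 ≤ g c + η * ‖c‖ ^ 2) :
    circleAverage g c r ≤ g c - η * r ^ 2 := by
  have hint_g : CircleIntegrable g c r := hg.circleIntegrable'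
  have hint_sq : CircleIntegrable (fun z => η • ‖z‖ ^ 2) c r :=
    (by fun_prop : Continuous _).continuousOn.circleIntegrable'
  have havg := circleAverage_mono_on_of_le_circle (hint_g.add hint_sq) hmax
  rw [circleAverage_add hint_g hint_sq, circleAverage_fun_smul, circleAverage_norm_sq,
    smul_eq_mul] at havg
  linarith

lemma circleAverage_sub_le_of_add_sub_le {g G ℓ : ℂ → ℝ} {c : ℂ} {r κ : ℝ}
    (hg : CircleIntegrable g c r) (hG : CircleIntegrable G c r) (hℓ : CircleIntegrable ℓ c r)
    (hmean : circleAverage ℓ c r = 0) (h : ∀ w ∈ sphere c |r|, G w + ℓ w - κ ≤ g w) :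
    circleAverage G c r - κ ≤ circleAverage g c r := by
  have hκ : CircleIntegrable (fun _ => κ) c r := circleIntegrable_const κ c r
  calc circleAverage G c r - κ = circleAverage (G + ℓ - fun _ => κ) c r := by
        rw [circleAverage_sub (hG.add hℓ) hκ, circleAverage_add hG hℓ, hmean, add_zero,
          circleAverage_const]
    _ ≤ circleAverage g c r := circleAverage_mono ((hG.add hℓ).sub hκ) hg h

lemma le_of_lowerLaplacianNonnegAt {U : Set ℂ} (hU : Bornology.IsBounded U) {g : ℂ → ℝ}
    (hg : ContinuousOn g (closure U)) (hlap : ∀ z ∈ interior U, LowerLaplacianNonnegAt g z) {M : ℝ}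
    (hM : ∀ z ∈ frontier U, g z ≤ M) {z : ℂ} (hz : z ∈ closure U) : g z ≤ M := by
  by_contra! hlt
  obtain ⟨R, hR⟩ := hU.closure.exists_norm_le
  obtain ⟨η, hη, hηR⟩ : ∃ η > 0, η * R ^ 2 < g z - M :=
    (exists_pos_mul_lt (sub_pos.2 hlt) (R ^ 2)).imp fun η h => ⟨h.1, by linarith [h.2]⟩
  have hcont : ContinuousOn (fun w => g w + η * ‖w‖ ^ 2) (closure U) := hg.add (by fun_prop)
  obtain ⟨z₀, hz₀, hmax⟩ := hU.isCompact_closure.exists_isMaxOn ⟨z, hz⟩ hcont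
  have hz₀_interior : z₀ ∈ interior U := by
    rw [closure_eq_interior_union_frontier] at hz₀
    refine hz₀.resolve_right fun hfr => ?_
    have hz₀_le : η * ‖z₀‖ ^ 2 ≤ η * R ^ 2 := by
      gcongr
      exact hR z₀ (frontier_subset_closure hfr)
    have hz_nonneg : 0 ≤ η * ‖z‖ ^ 2 := by positivity
    linarith [isMaxOn_iff.1 hmax z hz, hM z₀ hfr]
  obtain ⟨r, hr_avg, hr_ball, hr⟩ := ((hlap z₀ hz₀_interior (η / 2) (half_pos hη)).and
    ((eventually_closedBall_abs_subset (isOpen_interior.mem_nhds hz₀_interior)).and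
      self_mem_nhdsWithin)).exists
  have hsphere : sphere z₀ |r| ⊆ closure U :=
    sphere_subset_closedBall.trans (hr_ball.trans (interior_subset.trans subset_closure))
  have havg_le := circleAverage_le_sub_of_forall_sphere (hg.mono hsphere) fun w hw =>
    isMaxOn_iff.1 hmax w (hsphere hw)
  have hηr : 0 < η * r ^ 2 := mul_pos hη (pow_pos hr 2)
  linarith

lemma isBigO_sub_tangent {φ : ℂ → E} {z : ℂ} (hφ : AnalyticAt ℂ φ z) :
    (fun w => φ w - (φ z + (w - z) • deriv φ z)) =O[𝓝 z] fun w => ‖w - z‖ ^ 2 := by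
  obtain ⟨p, hp⟩ := hφ
  have hslope : (fun w => dslope φ z w - dslope φ z z) =O[𝓝 z] fun w => w - z :=
    hp.has_fpower_series_dslope_fslope.differentiableAt.isBigO_sub
  have hprod := ((isBigO_refl (fun w => w - z) (𝓝 z)).smul hslope).norm_right
  refine hprod.congr (fun w => ?_) (fun w => ?_)
  · rw [dslope_same, smul_sub, sub_smul_dslope, sub_sub]
  · rw [norm_smul, sq]

lemma isLittleO_comp_sub_comp_tangent {v : E → ℝ} {φ : ℂ → E} {z : ℂ} {L : E →L[ℝ] ℝ}
    (hv : HasStrictFDerivAt v L (φ z)) (hφ : AnalyticAt ℂ φ z) :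
    (fun w => v (φ w) - v (φ z + (w - z) • deriv φ z) - L (φ w - (φ z + (w - z) • deriv φ z)))
      =o[𝓝 z] fun w => ‖w - z‖ ^ 2 := by
  have htangent : Tendsto (fun w => φ z + (w - z) • deriv φ z) (𝓝 z) (𝓝 (φ z)) :=
    (by fun_prop : Continuous fun w => φ z + (w - z) • deriv φ z).tendsto' z _ (by simp)
  exact (hv.isLittleO.comp_tendsto (hφ.continuousAt.prodMk_nhds htangent)).trans_isBigO
    (isBigO_sub_tangent hφ)

lemma LinewiseSubmeanAt.lowerLaplacianNonnegAt_comp [CompleteSpace E] {v : E → ℝ}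
    (hv : ContDiff ℝ 1 v) {φ : ℂ → E} {z : ℂ} (hφ : AnalyticAt ℂ φ z)
    (hsub : LinewiseSubmeanAt v (φ z)) : LowerLaplacianNonnegAt (fun w => v (φ w)) z := by
  intro η hη
  set T : ℂ → E := fun w => φ z + (w - z) • deriv φ z
  set L := fderiv ℝ v (φ z)
  have hT : Differentiable ℂ T := by fun_prop
  have hTz : T z = φ z := by simp [T]
  have hlin : (fun w => v (φ w) - v (T w) - L (φ w - T w)) =o[𝓝 z] fun w => ‖w - z‖ ^ 2 :=
    isLittleO_comp_sub_comp_tangent (hv.hasStrictFDerivAt one_ne_zero) hφ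
  filter_upwards [hsub (deriv φ z), eventually_closedBall_abs_subset
    ((hlin.bound hη).and hφ.eventually_analyticAt)] with r hr_sub hr_ball
  have hφ_diff : DifferentiableOn ℂ φ (closedBall z |r|) := fun w hw =>
    (hr_ball hw).2.differentiableAt.differentiableWithinAt
  have hφ_cont : ContinuousOn φ (sphere z |r|) :=
    hφ_diff.continuousOn.mono sphere_subset_closedBall
  -- `L` of the deviation from the tangent line is harmonic and vanishes at `z`.
  have hL_avg : circleAverage (fun w => L (φ w - T w)) z r = 0 := by
    have := circleAverage_clm_comp_of_differentiableOn L (hφ_diff.sub hT.differentiableOn)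
    simpa [hTz] using this
  have hT_avg : v (φ z) ≤ circleAverage (fun w => v (T w)) z r := by
    simpa [← circleAverage_map_add_const (c := z), T] using hr_sub
  have hle : circleAverage (fun w => v (T w)) z r - η * r ^ 2 ≤
      circleAverage (fun w => v (φ w)) z r := by
    refine circleAverage_sub_le_of_add_sub_le
      (hv.continuous.comp_continuousOn hφ_cont).circleIntegrable'
      (hv.continuous.comp hT.continuous).continuousOn.circleIntegrable'
      (L.continuous.comp_continuousOn (hφ_cont.sub hT.continuous.continuousOn)).circleIntegrable'
      hL_avg fun w hw => ?_
    have hbound := (hr_ball (sphere_subset_closedBall hw)).1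
    rw [norm_pow, norm_norm, mem_sphere_iff_norm.1 hw, sq_abs, Real.norm_eq_abs] at hbound
    change v (T w) + L (φ w - T w) - η * r ^ 2 ≤ v (φ w)
    linarith [(abs_le.1 hbound).1]
  linarith

end MaximumPrinciple

section Mollification

open Filter Topology MeasureTheory Real Convolution ContinuousLinearMap

lemma circleAverage_integral_comm {X : Type*} [TopologicalSpace X] [T2Space X]
    [MeasurableSpace X] [OpensMeasurableSpace X] {μ : Measure X}
    [IsFiniteMeasureOnCompacts μ] [SFinite μ] {F : ℂ → X → ℝ} (hF : Continuous (Function.uncurry F))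
    {K : Set X} (hK : IsCompact K) (hFK : ∀ w, ∀ t ∉ K, F w t = 0) (c : ℂ) (r : ℝ) :
    circleAverage (fun w => ∫ t, F w t ∂μ) c r = ∫ t, circleAverage (fun w => F w t) c r ∂μ := by
  have hcircle : Continuous (Function.uncurry fun (θ : ℝ) t => F (circleMap c r θ) t) :=
    hF.comp (((continuous_circleMap c r).comp continuous_fst).prodMk continuous_snd)
  have hint_K : IntegrableOn (Function.uncurry fun (θ : ℝ) t => F (circleMap c r θ) t)
      (uIoc 0 (2 * π) ×ˢ K) (volume.prod μ) :=
    (hcircle.continuousOn.integrableOn_compact (isCompact_uIcc.prod hK)).mono_set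
      (prod_mono uIoc_subset_uIcc subset_rfl)
  have hint : Integrable (Function.uncurry fun (θ : ℝ) t => F (circleMap c r θ) t)
      ((volume.restrict (uIoc 0 (2 * π))).prod μ) := by
    rw [← Measure.restrict_univ (μ := μ), Measure.prod_restrict]
    refine hint_K.of_forall_sdiff_eq_zero (measurableSet_uIoc.prod MeasurableSet.univ) ?_
    rintro ⟨θ, t⟩ ⟨⟨hθ, -⟩, ht⟩
    exact hFK _ t fun htK => ht ⟨hθ, htK⟩
  simp only [circleAverage_def]
  rw [intervalIntegral_integral_swap hint, ← integral_smul]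

lemma continuous_circleAverage_line {u : E → ℝ} (hu : Continuous u) (a : E) (c : ℂ) (r : ℝ) :
    Continuous fun y => circleAverage (fun w => u (y + w • a)) c r := by
  simp only [circleAverage_def]
  have hcircle : Continuous (Function.uncurry fun (y : E) (θ : ℝ) => u (y + circleMap c r θ • a)) :=
    by fun_prop
  have hint := intervalIntegral.continuous_parametric_intervalIntegral_of_continuous'
    (μ := volume) hcircle 0 (2 * π)
  exact hint.const_smul (2 * π)⁻¹

variable [MeasurableSpace E] [BorelSpace E] [FiniteDimensional ℂ E] {μ : Measure E}
  [μ.IsAddHaarMeasure]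

lemma circleAverage_convolution {g u : E → ℝ} (hg : Continuous g) (hgs : HasCompactSupport g)
    (hu : Continuous u) (x a : E) (c : ℂ) (r : ℝ) :
    circleAverage (fun w => (g ⋆[lsmul ℝ ℝ, μ] u) (x + w • a)) c r =
      (g ⋆[lsmul ℝ ℝ, μ] fun y => circleAverage (fun w => u (y + w • a)) c r) x := by
  simp only [convolution_def, lsmul_apply]
  rw [circleAverage_integral_comm (by fun_prop) hgs fun w t ht => by
    rw [image_eq_zero_of_notMem_tsupport ht, zero_smul]]
  simp only [circleAverage_fun_smul, sub_add_eq_add_sub]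

lemma convolution_normed_contDiffBump_mono (χ : ContDiffBump (0 : E)) {u v : E → ℝ}
    (hu : Continuous u) (hv : Continuous v) {x : E} (huv : ∀ y ∈ ball x χ.rOut, u y ≤ v y) :
    (χ.normed μ ⋆[lsmul ℝ ℝ, μ] u) x ≤ (χ.normed μ ⋆[lsmul ℝ ℝ, μ] v) x := by
  have hexists {h : E → ℝ} (hh : Continuous h) :
      ConvolutionExists (χ.normed μ) h (lsmul ℝ ℝ) μ :=
    χ.hasCompactSupport_normed.convolutionExists_left _ χ.continuous_normed hh.locallyIntegrable
  refine integral_mono (hexists hu x) (hexists hv x) fun t => ?_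
  by_cases ht : t ∈ ball 0 χ.rOut
  · exact mul_le_mul_of_nonneg_left (huv _ (by simpa [dist_eq_norm] using ht)) (χ.nonneg_normed t)
  · have hχt : χ.normed μ t = 0 := by rwa [← Function.notMem_support, χ.support_normed_eq]
    simp [hχt]

lemma linewiseSubmeanAt_convolution (χ : ContDiffBump (0 : E)) {u : E → ℝ} (hu : Continuous u)
    {x : E} (h : ∀ a : E, ∀ᶠ r in 𝓝[>] (0 : ℝ), ∀ y ∈ ball x χ.rOut,
      u y ≤ circleAverage (fun w : ℂ => u (y + w • a)) 0 r) :
    LinewiseSubmeanAt (χ.normed μ ⋆[lsmul ℝ ℝ, μ] u) x := by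
  intro a
  filter_upwards [h a] with r hr
  rw [circleAverage_convolution χ.continuous_normed χ.hasCompactSupport_normed hu]
  exact convolution_normed_contDiffBump_mono χ hu (continuous_circleAverage_line hu a 0 r) hr

end Mollification

section Plurisubharmonic

open Filter Topology MeasureTheory Real Convolution ContinuousLinearMap
open scoped ContDiff

lemma PlurisubharmonicOn.le_circleAverage {u : E → ℝ} {Ω : Set E} (hu : PlurisubharmonicOn u Ω)
    {x a : E} {r : ℝ} (hr : 0 < r) (h : ∀ w ∈ closedBall (0 : ℂ) r, x + w • a ∈ Ω) :
    u x ≤ circleAverage (fun w : ℂ => u (x + w • a)) 0 r := by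
  calc u x = u (x + (0 : ℂ) • a) := by rw [zero_smul, add_zero]
    _ ≤ circleAverage (fun w : ℂ => u (x + w • a)) 0 r := hu.2 x a 0 r hr h

lemma exists_continuous_eqOn_isClosed {X : Type*} [TopologicalSpace X] [NormalSpace X] {s : Set X}
    (hs : IsClosed s) {u : X → ℝ} (hu : ContinuousOn u s) :
    ∃ v : X → ℝ, Continuous v ∧ EqOn v u s := by
  obtain ⟨v, hv⟩ := ContinuousMap.exists_restrict_eq hs ⟨s.domRestrict u, hu.domRestrict⟩
  exact ⟨v, v.continuous, fun x hx => DFunLike.congr_fun hv ⟨x, hx⟩⟩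

lemma eventually_add_smul_mem_cthickening {x a : E} {K : Set E} (hx : x ∈ K) {ρ ε : ℝ}
    (h : ε < ρ) : ∀ᶠ r in 𝓝[>] (0 : ℝ), ∀ y ∈ closedBall x ε, ∀ w ∈ closedBall (0 : ℂ) r,
      y + w • a ∈ cthickening ρ K := by
  have hsmall : ∀ᶠ r in 𝓝[>] (0 : ℝ), r * ‖a‖ < ρ - ε :=
    ((by fun_prop : Continuous fun r : ℝ => r * ‖a‖).tendsto' 0 0 (by simp)).mono_left
      nhdsWithin_le_nhds |>.eventually_lt_const (sub_pos.2 h)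
  filter_upwards [hsmall] with r hr y hy w hw
  refine mem_cthickening_of_dist_le _ x _ _ hx ?_
  calc dist (y + w • a) x ≤ dist (y + w • a) y + dist y x := dist_triangle _ _ _
    _ ≤ r * ‖a‖ + ε := by
      rw [dist_self_add_left, norm_smul]
      gcongr
      exacts [mem_closedBall_zero_iff.1 hw, hy]
    _ ≤ ρ := by linarith

variable [FiniteDimensional ℂ E]

lemma PlurisubharmonicOn.exists_contDiff_approx {u : E → ℝ} {Ω K : Set E}
    (hu : PlurisubharmonicOn u Ω) (huc : ContinuousOn u Ω) (hΩ : IsOpen Ω) (hK : IsCompact K)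
    (hKΩ : K ⊆ Ω) {ε : ℝ} (hε : 0 < ε) :
    ∃ v : E → ℝ, ContDiff ℝ ∞ v ∧ ∀ x ∈ K, |v x - u x| ≤ ε ∧ LinewiseSubmeanAt v x := by
  borelize E
  obtain ⟨ρ, hρ, hρΩ⟩ := hK.exists_cthickening_subset_open hΩ hKΩ
  obtain ⟨u', hu'c, hu'⟩ := exists_continuous_eqOn_isClosed isClosed_cthickening (huc.mono hρΩ)
  obtain ⟨δ, hδ, hδu'⟩ := mem_uniformity_dist.1 (hK.uniformContinuousAt_of_continuousAt u'
    (fun x _ => hu'c.continuousAt) (dist_mem_uniformity hε))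
  have hmin : 0 < min δ (ρ / 2) := lt_min hδ (half_pos hρ)
  let χ : ContDiffBump (0 : E) :=
    ⟨min δ (ρ / 2) / 2, min δ (ρ / 2), half_pos hmin, half_lt_self hmin⟩
  have hχρ : χ.rOut < ρ := (min_le_right δ (ρ / 2)).trans_lt (half_lt_self hρ)
  refine ⟨χ.normed Measure.addHaar ⋆[lsmul ℝ ℝ, Measure.addHaar] u',
    χ.hasCompactSupport_normed.contDiff_convolution_left (n := ⊤) (lsmul ℝ ℝ) χ.contDiff_normed
      hu'c.locallyIntegrable, fun x hx => ⟨?_, linewiseSubmeanAt_convolution χ hu'c fun a => ?_⟩⟩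
  · rw [← hu' (self_subset_cthickening K hx), ← Real.dist_eq]
    refine χ.dist_normed_convolution_le hu'c.aestronglyMeasurable fun y hy => ?_
    rw [dist_comm]
    exact (hδu' ((mem_ball'.1 hy).trans_le (min_le_left _ _)) hx).le
  · filter_upwards [eventually_add_smul_mem_cthickening hx hχρ, self_mem_nhdsWithin] with
      r hmem hr y hy
    have hline := hmem y (ball_subset_closedBall hy)
    have hy_mem : y ∈ cthickening ρ K := by
      simpa using hline 0 (mem_closedBall_self hr.le)
    have hcircle : EqOn (fun w : ℂ => u' (y + w • a)) (fun w => u (y + w • a)) (sphere 0 |r|) :=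
      fun w hw => hu' (hline w (by simpa [abs_of_pos (mem_Ioi.1 hr)] using hw.le))
    rw [hu' hy_mem, circleAverage_congr_sphere hcircle]
    exact hu.le_circleAverage hr fun w hw => hρΩ (hline w hw)

theorem PlurisubharmonicOn.comp_le_of_frontier_le {u : E → ℝ} {Ω : Set E}
    (hu : PlurisubharmonicOn u Ω) (huc : ContinuousOn u Ω) (hΩ : IsOpen Ω) {U : Set ℂ}
    (hU : Bornology.IsBounded U) {φ : ℂ → E} (hφ : DiffContOnCl ℂ φ U)
    (hφΩ : MapsTo φ (closure U) Ω) {M : ℝ} (hM : ∀ z ∈ frontier U, u (φ z) ≤ M) {z : ℂ}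
    (hz : z ∈ closure U) : u (φ z) ≤ M := by
  have : CompleteSpace E := FiniteDimensional.complete ℂ E
  refine le_of_forall_pos_le_add fun ε hε => ?_
  obtain ⟨v, hv, hvu⟩ := hu.exists_contDiff_approx huc hΩ
    (hU.isCompact_closure.image_of_continuousOn hφ.continuousOn) hφΩ.image_subset (half_pos hε)
  have happrox : ∀ w ∈ closure U, |v (φ w) - u (φ w)| ≤ ε / 2 := fun w hw =>
    (hvu _ (mem_image_of_mem φ hw)).1
  have hlap : ∀ w ∈ interior U, LowerLaplacianNonnegAt (fun w => v (φ w)) w := fun w hw =>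
    LinewiseSubmeanAt.lowerLaplacianNonnegAt_comp (hv.of_le (mod_cast le_top))
      (hφ.differentiableOn.analyticAt (mem_interior_iff_mem_nhds.1 hw))
      (hvu _ (mem_image_of_mem φ (subset_closure (interior_subset hw)))).2
  have hv_le : v (φ z) ≤ M + ε / 2 := by
    refine le_of_lowerLaplacianNonnegAt hU (hv.continuous.comp_continuousOn hφ.continuousOn) hlap
      (fun w hw => ?_) hz
    change v (φ w) ≤ M + ε / 2
    linarith [hM w hw, (abs_le.1 (happrox w (frontier_subset_closure hw))).2]
  linarith [(abs_le.1 (happrox z hz)).1]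

end Plurisubharmonic

section ContinuityPrinciple

open Filter Topology

lemma eventually_mapsTo_of_continuousOn {T X Y : Type*} [TopologicalSpace T] [TopologicalSpace X]
    [TopologicalSpace Y] {F : T → X → Y} {K : Set X} {s : Set Y}
    (hF : ContinuousOn (Function.uncurry F) (univ ×ˢ K)) (hK : IsCompact K) (hs : IsOpen s) {t₀ : T}
    (h : MapsTo (F t₀) K s) : ∀ᶠ t in 𝓝 t₀, MapsTo (F t) K s := by
  have htube : ∀ᶠ t in 𝓝 t₀, ∀ x ∈ K, x ∈ K → F t x ∈ s := by
    refine hK.eventually_forall_of_forall_eventually fun x hx => ?_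
    have hnear := (hF (t₀, x) ⟨mem_univ _, hx⟩).eventually (hs.mem_nhds (h hx))
    exact (eventually_nhdsWithin_iff.1 hnear).mono fun p hp hpK => hp ⟨mem_univ _, hpK⟩
  exact htube.mono fun t ht x hx => ht x hx hx

lemma infDist_compl_pos_iff {X : Type*} [PseudoMetricSpace X] {D : Set X} (hD : IsOpen D)
    (hne : Dᶜ.Nonempty) {x : X} : 0 < infDist x Dᶜ ↔ x ∈ D := by
  rw [← hD.isClosed_compl.notMem_iff_infDist_pos hne, notMem_compl_iff]

variable [FiniteDimensional ℂ E] {D : Set E} {U : Set ℂ}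

lemma IsPseudoconvex.le_infDist_compl (hpsc : IsPseudoconvex D) (hD : IsOpen D)
    (hne : Dᶜ.Nonempty) (hU : Bornology.IsBounded U) {φ : ℂ → E} (hφ : DiffContOnCl ℂ φ U)
    (hφD : MapsTo φ (closure U) D) {δ : ℝ} (hδ : 0 < δ)
    (hfr : ∀ z ∈ frontier U, δ ≤ infDist (φ z) Dᶜ) {z : ℂ} (hz : z ∈ closure U) :
    δ ≤ infDist (φ z) Dᶜ := by
  have hcont : ContinuousOn (fun x => -Real.log (infDist x Dᶜ)) D :=
    ((continuous_infDist_pt _).continuousOn.log fun x hx =>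
      ((infDist_compl_pos_iff hD hne).2 hx).ne').neg
  have hlog : -Real.log (infDist (φ z) Dᶜ) ≤ -Real.log δ :=
    PlurisubharmonicOn.comp_le_of_frontier_le hpsc hcont hD hU hφ hφD
      (fun w hw => neg_le_neg (Real.log_le_log hδ (hfr w hw))) hz
  exact (Real.log_le_log_iff hδ ((infDist_compl_pos_iff hD hne).2 (hφD hz))).1
    (neg_le_neg_iff.1 hlog)

theorem IsPseudoconvex.continuity_principle (hpsc : IsPseudoconvex D) (hD : IsOpen D)
    (hU : Bornology.IsBounded U) {T : Type*} [TopologicalSpace T] [PreconnectedSpace T]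
    {F : T → ℂ → E} (hF : ContinuousOn (Function.uncurry F) (univ ×ˢ closure U))
    (hF_diff : ∀ t, DifferentiableOn ℂ (F t) U) (hfr : ∀ t, MapsTo (F t) (frontier U) D) {t₀ : T}
    (ht₀ : MapsTo (F t₀) (closure U) D) (t : T) : MapsTo (F t) (closure U) D := by
  rcases Dᶜ.eq_empty_or_nonempty with huniv | hne
  · rw [compl_empty_iff.1 huniv]
    exact mapsTo_univ _ _
  have hF_cl : ∀ t, DiffContOnCl ℂ (F t) U := fun t =>
    ⟨hF_diff t, hF.comp (Continuous.prodMk_right t).continuousOn fun z hz => ⟨mem_univ t, hz⟩⟩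
  have hopen : IsOpen {t | MapsTo (F t) (closure U) D} :=
    isOpen_iff_mem_nhds.2 fun t ht =>
      eventually_mapsTo_of_continuousOn hF hU.isCompact_closure hD ht
  have hclosed : IsClosed {t | MapsTo (F t) (closure U) D} := by
    refine isClosed_iff_frequently.2 fun s hs z hz => ?_
    have hfr_cpt : IsCompact (frontier U) :=
      hU.isCompact_closure.of_isClosed_subset isClosed_frontier frontier_subset_closure
    obtain ⟨δ, hδ, hδs⟩ := hfr_cpt.exists_forall_le'
      ((continuous_infDist_pt Dᶜ).comp_continuousOn
        ((hF_cl s).continuousOn.mono frontier_subset_closure))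
      fun w hw => (infDist_compl_pos_iff hD hne).2 (hfr s hw)
    have hfr_near : ∀ᶠ t in 𝓝 s, MapsTo (F t) (frontier U) {x | δ / 2 < infDist x Dᶜ} :=
      eventually_mapsTo_of_continuousOn
        (hF.mono (prod_mono subset_rfl frontier_subset_closure)) hfr_cpt
        (isOpen_lt continuous_const (continuous_infDist_pt _))
        fun w hw => (half_lt_self hδ).trans_le (hδs w hw)
    have hdist : ∃ᶠ t in 𝓝 s, δ / 2 ≤ infDist (F t z) Dᶜ :=
      (hs.and_eventually hfr_near).mono fun t ht =>
        hpsc.le_infDist_compl hD hne hU (hF_cl t) ht.1 (half_pos hδ) (fun w hw => (ht.2 hw).le) hz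
    have hcont : Continuous fun t => infDist (F t z) Dᶜ :=
      (continuous_infDist_pt _).comp <| continuousOn_univ.1 <|
        hF.comp (Continuous.prodMk_left z).continuousOn fun t _ => ⟨mem_univ t, hz⟩
    exact (infDist_compl_pos_iff hD hne).1
      ((half_pos hδ).trans_le (ge_of_tendsto_of_frequently (hcont.tendsto s) hdist))
  exact eq_univ_iff_forall.1 (IsClopen.eq_univ ⟨hclosed, hopen⟩ ⟨t₀, ht₀⟩) t

theorem IsPseudoconvex.mapsTo_closure_of_balanced (hpsc : IsPseudoconvex D) (hD : IsOpen D)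
    (hbal : Balanced ℂ D) (h0 : (0 : E) ∈ D) (hU : Bornology.IsBounded U) {φ : ℂ → E}
    (hφ : DiffContOnCl ℂ φ U) (hfr : MapsTo φ (frontier U) D) : MapsTo φ (closure U) D := by
  have hF : ContinuousOn (Function.uncurry fun (t : unitInterval) z => ((t : ℝ) : ℂ) • φ z)
      (univ ×ˢ closure U) :=
    (by fun_prop : Continuous fun p : unitInterval × ℂ => ((p.1 : ℝ) : ℂ)).continuousOn.smul
      (hφ.continuousOn.comp continuousOn_snd fun p hp => hp.2)
  have hdisc := hpsc.continuity_principle hD hU hF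
    (fun t => hφ.differentiableOn.const_smul _)
    (fun t z hz => hbal.smul_mem (by simpa [abs_of_nonneg t.2.1] using t.2.2) (hfr hz))
    (t₀ := 0) (fun z _ => by simpa using h0) 1
  simpa using hdisc

end ContinuityPrinciple

section Blaschke

/-- The Blaschke factor `z ↦ (α - z) / (1 - ᾱ z)`, written `m_α` in the paper: the involutive
automorphism of the disc exchanging `α` and `0`. -/
def blaschkeFactor (α z : ℂ) : ℂ := (α - z) / (1 - (starRingEnd ℂ) α * z)

variable {α z : ℂ}

lemma norm_one_sub_conj_mul_sq_sub_norm_sub_sq (α z : ℂ) :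
    ‖1 - (starRingEnd ℂ) α * z‖ ^ 2 - ‖α - z‖ ^ 2 = (1 - ‖α‖ ^ 2) * (1 - ‖z‖ ^ 2) := by
  simp only [← normSq_eq_norm_sq, normSq_apply, sub_re, sub_im, one_re, one_im, mul_re, mul_im,
    conj_re, conj_im]
  ring

lemma one_sub_conj_mul_ne_zero (hα : ‖α‖ < 1) (hz : ‖z‖ ≤ 1) :
    1 - (starRingEnd ℂ) α * z ≠ 0 := by
  refine sub_ne_zero.2 fun h => ?_
  have hlt : ‖(starRingEnd ℂ) α * z‖ < 1 := by
    rw [norm_mul, RCLike.norm_conj]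
    exact mul_lt_one_of_nonneg_of_lt_one_left (norm_nonneg α) hα hz
  simp [← h] at hlt

lemma norm_blaschkeFactor_le_one (hα : ‖α‖ < 1) (hz : ‖z‖ ≤ 1) : ‖blaschkeFactor α z‖ ≤ 1 := by
  have hnonneg : 0 ≤ (1 - ‖α‖ ^ 2) * (1 - ‖z‖ ^ 2) :=
    mul_nonneg (sub_nonneg.2 (pow_le_one₀ (norm_nonneg _) hα.le))
      (sub_nonneg.2 (pow_le_one₀ (norm_nonneg _) hz))
  rw [blaschkeFactor, norm_div, div_le_one (norm_pos_iff.2 (one_sub_conj_mul_ne_zero hα hz)),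
    ← sq_le_sq₀ (norm_nonneg _) (norm_nonneg _), ← sub_nonneg,
    norm_one_sub_conj_mul_sq_sub_norm_sub_sq]
  exact hnonneg

lemma norm_blaschkeFactor_eq_one (hα : ‖α‖ < 1) (hz : ‖z‖ = 1) : ‖blaschkeFactor α z‖ = 1 := by
  rw [blaschkeFactor, norm_div, eq_comm,
    eq_div_iff (norm_ne_zero_iff.2 (one_sub_conj_mul_ne_zero hα hz.le)), one_mul,
    ← sq_eq_sq₀ (norm_nonneg _) (norm_nonneg _), ← sub_eq_zero,
    norm_one_sub_conj_mul_sq_sub_norm_sub_sq, hz]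
  ring

lemma blaschkeFactor_ne_zero (hα : ‖α‖ < 1) (hz : ‖z‖ ≤ 1) (hne : z ≠ α) :
    blaschkeFactor α z ≠ 0 :=
  div_ne_zero (sub_ne_zero.2 hne.symm) (one_sub_conj_mul_ne_zero hα hz)

lemma blaschkeFactor_self (α : ℂ) : blaschkeFactor α α = 0 := by
  rw [blaschkeFactor, sub_self, zero_div]

lemma differentiableOn_blaschkeFactor (hα : ‖α‖ < 1) :
    DifferentiableOn ℂ (blaschkeFactor α) (closedBall 0 1) :=
  DifferentiableOn.div (by fun_prop) (by fun_prop) fun _ hz =>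
    one_sub_conj_mul_ne_zero hα (mem_closedBall_zero_iff.1 hz)

lemma exists_eq_blaschkeFactor_smul [CompleteSpace E] (hα : ‖α‖ < 1) {U : Set ℂ} (hU : U ∈ nhds α)
    {h : ℂ → E} (hh : DifferentiableOn ℂ h U) (hα0 : h α = 0) :
    ∃ φ : ℂ → E, DifferentiableOn ℂ φ U ∧ ∀ z ∈ closedBall 0 1, h z = blaschkeFactor α z • φ z := by
  refine ⟨fun z => ((starRingEnd ℂ) α * z - 1) • dslope h α z,
    DifferentiableOn.smul (by fun_prop) ((differentiableOn_dslope hU).2 hh), fun z hz => ?_⟩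
  have hden := one_sub_conj_mul_ne_zero hα (mem_closedBall_zero_iff.1 hz)
  calc h z = (z - α) • dslope h α z := by rw [sub_smul_dslope, hα0, sub_zero]
    _ = blaschkeFactor α z • ((starRingEnd ℂ) α * z - 1) • dslope h α z := by
      rw [smul_smul, blaschkeFactor, div_mul_eq_mul_div]
      congr 1
      rw [eq_div_iff hden]
      ring

end Blaschke

section WeakExtremal

variable [FiniteDimensional ℂ E] {D : Set E}

theorem IsPseudoconvex.mapsTo_closedBall_of_blaschkeFactor_smul (hpsc : IsPseudoconvex D)
    (hD : IsOpen D) (hbal : Balanced ℂ D) {α : ℂ} (hα : ‖α‖ < 1) {φ : ℂ → E}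
    (hφ : DifferentiableOn ℂ φ (closedBall 0 1))
    (h : MapsTo (fun z => blaschkeFactor α z • φ z) (closedBall 0 1) D) :
    MapsTo φ (closedBall 0 1) D := by
  have hfr : MapsTo φ (frontier (ball 0 1)) D := by
    rw [frontier_ball _ one_ne_zero]
    intro z hz
    have hnorm : ‖blaschkeFactor α z‖ = ‖(1 : ℂ)‖ :=
      (norm_blaschkeFactor_eq_one hα (mem_sphere_zero_iff_norm.1 hz)).trans norm_one.symm
    simpa using (hbal.smul_mem_iff hnorm).1 (h (sphere_subset_closedBall hz))
  have h0 : (0 : E) ∈ D := hbal.zero_mem ⟨_, h (mem_closedBall_self zero_le_one)⟩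
  rw [← closure_ball _ one_ne_zero] at hφ ⊢
  exact hpsc.mapsTo_closure_of_balanced hD hbal h0 isBounded_ball hφ.diffContOnCl hfr

lemma ExtSolv.blaschkeFactor_smul (hpsc : IsPseudoconvex D) (hD : IsOpen D) (hbal : Balanced ℂ D)
    {m : ℕ} {lam : Fin (m + 1) → ℂ} (hinj : Function.Injective lam) (hmem : ∀ j, lam j ∈ 𝔻)
    {f : ℂ → E} (hf : ExtSolv D (fun j : Fin m => lam j.castSucc) f) :
    ExtSolv D lam fun z => blaschkeFactor (lam (Fin.last m)) z • f z := by
  have : CompleteSpace E := FiniteDimensional.complete ℂ E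
  rintro ⟨U, h, hU, hcU, hh, hhD, hinterp⟩
  refine hf ?_
  set α := lam (Fin.last m)
  have hα : ‖α‖ < 1 := mem_ball_zero_iff.1 (hmem _)
  have hmem_cl : ∀ j, lam j ∈ closedBall (0 : ℂ) 1 := fun j => ball_subset_closedBall (hmem j)
  obtain ⟨φ, hφ, hhφ⟩ := exists_eq_blaschkeFactor_smul hα (hU.mem_nhds (hcU (hmem_cl _))) hh
    (by simp [α, hinterp, blaschkeFactor_self])
  have hφD : MapsTo φ (closedBall 0 1) D :=
    hpsc.mapsTo_closedBall_of_blaschkeFactor_smul hD hbal hα (hφ.mono hcU) fun z hz => by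
      simpa only [← hhφ z hz] using hhD z (hcU hz)
  refine ⟨U ∩ φ ⁻¹' D, φ, hφ.continuousOn.isOpen_inter_preimage hU hD, subset_inter hcU hφD,
    hφ.mono inter_subset_left, fun z hz => hz.2, fun j => ?_⟩
  have hne : blaschkeFactor α (lam j.castSucc) ≠ 0 :=
    blaschkeFactor_ne_zero hα (mem_closedBall_zero_iff.1 (hmem_cl _))
      (hinj.ne j.castSucc_ne_last)
  exact smul_right_injective E hne ((hhφ _ (hmem_cl _)).symm.trans (hinterp j.castSucc))

theorem stmt4_general (hD : IsOpen D) (hbal : Balanced ℂ D) (hpsc : IsPseudoconvex D) {m : ℕ}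
    {lam : Fin (m + 1) → ℂ} (hinj : Function.Injective lam) (hmem : ∀ j, lam j ∈ 𝔻) {f : ℂ → E}
    (hf : IsWeakExtremal D (fun j : Fin m => lam j.castSucc) f) :
    IsWeakExtremal D lam fun z => blaschkeFactor (lam (Fin.last m)) z • f z := by
  obtain ⟨hf_diff, hfD, hf_ext⟩ := hf
  have hα : ‖lam (Fin.last m)‖ < 1 := mem_ball_zero_iff.1 (hmem _)
  refine ⟨((differentiableOn_blaschkeFactor hα).mono ball_subset_closedBall).smul hf_diff,
    fun z hz => hbal.smul_mem ?_ (hfD z hz), hf_ext.blaschkeFactor_smul hpsc hD hbal hinj hmem⟩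
  exact norm_blaschkeFactor_le_one hα (mem_ball_zero_iff.1 hz).le

end WeakExtremal

theorem stmt4 {n : ℕ} (D : Set (Fin n → ℂ)) (hDo : IsOpen D) (hDc : IsConnected D)
    (hbd : Bornology.IsBounded D) (hbal : Balanced ℂ D) (hpsc : IsPseudoconvex D)
    (m : ℕ) (hm : 2 ≤ m)
    (lam : Fin (m + 1) → ℂ) (hinj : Function.Injective lam) (hmem : ∀ j, lam j ∈ 𝔻)
    (f : ℂ → Fin n → ℂ)
    (hf : IsWeakExtremal D (fun j : Fin m => lam j.castSucc) f) :
    IsWeakExtremal D lam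
      (fun z => ((lam (Fin.last m) - z) / (1 - (starRingEnd ℂ) (lam (Fin.last m)) * z)) • f z) :=
  stmt4_general hDo hbal hpsc hinj hmem hf

end
end

section
/- Every 3-extremal map in the Euclidean unit ball 𝔹_n (n ≥ 2) that is not a 2-extremal is, up to composition with an automorphism of 𝔹_n, of the form λ ↦ (λa₁, √(1−a₁²)·λ·m(λ), 0, …, 0) where a₁ ∈ [0,1) and m is a Möbius automorphism of 𝔻. -/
open Complex Metric Set

noncomputable section

variable {E : Type*} [NormedAddCommGroup E] [NormedSpace ℂ E]

/-!
The proof is the Schur algorithm for maps from the disc into the unit ball of a Hilbert space. Let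
`φ_p` be the involutive automorphism of the ball exchanging `0` and `p`. By the Schwarz lemma
`f z = φ_{f x} (φ_x z • g z)`, where `g` either maps the disc into the open ball or is a constant
unit vector. In the first case an interpolant of `g` at given nodes yields an interpolant of `f` at
these nodes and `x`, so if `f` is extremal for `m + 1` nodes, then `g` is extremal for `m` nodes.

No map into the ball is extremal for one node. Hence for a 2-extremal `g` is constant, that is, `f`
parametrizes an affine disc, and recentring this disc at its point `a` closest to the origin gives
`f z = a + φ_α z • b` with `a` orthogonal to `b`. For a 3-extremal that is not a 2-extremal, `g` is
a 2-extremal, hence of this form.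
-/

section BallInvolution

open scoped InnerProductSpace ComplexConjugate

variable {H : Type*} [NormedAddCommGroup H] [InnerProductSpace ℂ H] {p z w : H}

/-- The involutive automorphism `φ_p` of the unit ball of an inner product space that exchanges
`0` and `p`; on `ℂ` it is the Möbius involution of the disc. In the usual formula
`φ_p z = (p - P z - s Q z) / (1 - ⟪p, z⟫)`, where `s = √(1 - ‖p‖²)` and `P`, `Q` are the orthogonal
projections onto `ℂ p` and its complement, the coefficient `(1 - s) / ‖p‖²` that multiplies
`⟪p, z⟫ p` is written as `(1 + s)⁻¹`, so that `p = 0` is not an exception. -/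
def ballInvolution (p z : H) : H :=
  (1 - ⟪p, z⟫_ℂ)⁻¹ •
    ((1 - ⟪p, z⟫_ℂ * (1 + (√(1 - ‖p‖ ^ 2) : ℂ))⁻¹) • p - (√(1 - ‖p‖ ^ 2) : ℂ) • z)

lemma one_sub_inner_ne_zero (hp : ‖p‖ < 1) (hz : ‖z‖ ≤ 1) : 1 - ⟪p, z⟫_ℂ ≠ 0 := by
  refine sub_ne_zero.mpr fun h => ?_
  have : ‖⟪p, z⟫_ℂ‖ < 1 := (norm_inner_le_norm p z).trans_lt
    ((mul_le_of_le_one_right (norm_nonneg p) hz).trans_lt hp)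
  simp [← h] at this

lemma one_add_ofReal_sqrt_ne_zero (r : ℝ) : (1 : ℂ) + (√r : ℂ) ≠ 0 := by
  have : 1 + √r ≠ 0 := by positivity
  exact_mod_cast this

lemma inner_self_eq_one_sub_sq_sqrt (hp : ‖p‖ ≤ 1) :
    ⟪p, p⟫_ℂ = 1 - (√(1 - ‖p‖ ^ 2) : ℂ) ^ 2 := by
  rw [← ofReal_pow, Real.sq_sqrt (by nlinarith [norm_nonneg p]), inner_self_eq_norm_sq_to_K]
  simp

@[simp]
lemma ballInvolution_zero_right (p : H) : ballInvolution p 0 = p := by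
  simp [ballInvolution]

@[simp]
lemma ballInvolution_zero_left (z : H) : ballInvolution 0 z = -z := by
  simp [ballInvolution]

lemma ballInvolution_of_inner_eq_zero (h : ⟪p, z⟫_ℂ = 0) :
    ballInvolution p z = p - (√(1 - ‖p‖ ^ 2) : ℂ) • z := by
  simp [ballInvolution, h]

lemma ballInvolution_complex {a : ℂ} (ha : ‖a‖ ≤ 1) (z : ℂ) :
    ballInvolution a z = (a - z) / (1 - conj a * z) := by
  have hs := one_add_ofReal_sqrt_ne_zero (1 - ‖a‖ ^ 2)
  have haa := inner_self_eq_one_sub_sq_sqrt ha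
  rw [RCLike.inner_apply] at haa
  simp only [ballInvolution, RCLike.inner_apply, smul_eq_mul, mul_comm z]
  rw [div_eq_inv_mul]
  congr 1
  field_simp
  linear_combination -z * haa

/-- Rudin, *Function Theory in the Unit Ball of `ℂⁿ`*, Theorem 2.2.2. -/
lemma one_sub_inner_ballInvolution (hp : ‖p‖ ≤ 1) (hz : 1 - ⟪z, p⟫_ℂ ≠ 0)
    (hw : 1 - ⟪p, w⟫_ℂ ≠ 0) :
    1 - ⟪ballInvolution p z, ballInvolution p w⟫_ℂ =
      (1 - ⟪p, p⟫_ℂ) * (1 - ⟪z, w⟫_ℂ) / ((1 - ⟪z, p⟫_ℂ) * (1 - ⟪p, w⟫_ℂ)) := by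
  have hs := one_add_ofReal_sqrt_ne_zero (1 - ‖p‖ ^ 2)
  simp only [ballInvolution, inner_smul_left, inner_smul_right, inner_sub_left, inner_sub_right,
    inner_self_eq_one_sub_sq_sqrt hp, map_sub, map_mul, map_inv₀, map_add, map_one, conj_ofReal,
    inner_conj_symm]
  field_simp
  ring

lemma one_sub_inner_self_ballInvolution (hp : ‖p‖ ≤ 1) (hw : 1 - ⟪p, w⟫_ℂ ≠ 0) :
    1 - ⟪p, ballInvolution p w⟫_ℂ = (1 - ⟪p, p⟫_ℂ) / (1 - ⟪p, w⟫_ℂ) := by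
  simpa using one_sub_inner_ballInvolution (z := 0) hp (by simp) hw

lemma one_sub_norm_sq_ballInvolution (hp : ‖p‖ < 1) (hz : ‖z‖ ≤ 1) :
    1 - ‖ballInvolution p z‖ ^ 2 =
      (1 - ‖p‖ ^ 2) * (1 - ‖z‖ ^ 2) / ‖1 - ⟪p, z⟫_ℂ‖ ^ 2 := by
  have hD := one_sub_inner_ne_zero hp hz
  have hconj : 1 - ⟪z, p⟫_ℂ = conj (1 - ⟪p, z⟫_ℂ) := by simp
  have h := one_sub_inner_ballInvolution hp.le (hconj ▸ (map_ne_zero _).mpr hD) hD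
  rw [hconj, conj_mul'] at h
  simp only [inner_self_eq_norm_sq_to_K, coe_algebraMap] at h
  exact_mod_cast h

lemma norm_ballInvolution_lt_one (hp : ‖p‖ < 1) (hz : ‖z‖ < 1) : ‖ballInvolution p z‖ < 1 := by
  have h := one_sub_norm_sq_ballInvolution hp hz.le
  have hD := norm_pos_iff.mpr (one_sub_inner_ne_zero hp hz.le)
  have hp' : 0 < 1 - ‖p‖ ^ 2 := by nlinarith [norm_nonneg p]
  have hz' : 0 < 1 - ‖z‖ ^ 2 := by nlinarith [norm_nonneg z]
  have : 0 < 1 - ‖ballInvolution p z‖ ^ 2 := h ▸ by positivity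
  nlinarith [norm_nonneg (ballInvolution p z)]

lemma norm_ballInvolution_le_one (hp : ‖p‖ < 1) (hz : ‖z‖ ≤ 1) : ‖ballInvolution p z‖ ≤ 1 := by
  have h := one_sub_norm_sq_ballInvolution hp hz
  have hp' : 0 ≤ 1 - ‖p‖ ^ 2 := by nlinarith [norm_nonneg p]
  have hz' : 0 ≤ 1 - ‖z‖ ^ 2 := by nlinarith [norm_nonneg z]
  have : 0 ≤ 1 - ‖ballInvolution p z‖ ^ 2 := h ▸ by positivity
  nlinarith [norm_nonneg (ballInvolution p z)]

lemma ballInvolution_ballInvolution (hp : ‖p‖ < 1) (hz : ‖z‖ ≤ 1) :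
    ballInvolution p (ballInvolution p z) = z := by
  have hD := one_sub_inner_ne_zero hp hz
  have hs := one_add_ofReal_sqrt_ne_zero (1 - ‖p‖ ^ 2)
  have hs₀ : (√(1 - ‖p‖ ^ 2) : ℂ) ≠ 0 := by
    have : √(1 - ‖p‖ ^ 2) ≠ 0 := (Real.sqrt_pos.mpr (by nlinarith [norm_nonneg p])).ne'
    exact_mod_cast this
  have hinner : 1 - ⟪p, ballInvolution p z⟫_ℂ =
      (√(1 - ‖p‖ ^ 2) : ℂ) ^ 2 / (1 - ⟪p, z⟫_ℂ) := by
    rw [one_sub_inner_self_ballInvolution hp.le hD, inner_self_eq_one_sub_sq_sqrt hp.le]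
    ring
  have hinner' : ⟪p, ballInvolution p z⟫_ℂ =
      1 - (√(1 - ‖p‖ ^ 2) : ℂ) ^ 2 / (1 - ⟪p, z⟫_ℂ) := by
    rw [← hinner]
    ring
  rw [ballInvolution, hinner, hinner', ballInvolution]
  match_scalars <;> field_simp
  ring

lemma ballInvolution_self (hp : ‖p‖ < 1) : ballInvolution p p = 0 := by
  simpa using ballInvolution_ballInvolution hp (z := 0) (by simp)

lemma ballInvolution_ne_zero (hp : ‖p‖ < 1) (hz : ‖z‖ ≤ 1) (hzp : z ≠ p) :
    ballInvolution p z ≠ 0 := fun h =>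
  hzp (by simpa [h] using (ballInvolution_ballInvolution hp hz).symm)

lemma differentiableOn_ballInvolution (p : H) :
    DifferentiableOn ℂ (ballInvolution p) {z | 1 - ⟪p, z⟫_ℂ ≠ 0} := by
  intro z (hz : 1 - ⟪p, z⟫_ℂ ≠ 0)
  have hinner : DifferentiableAt ℂ (fun z => ⟪p, z⟫_ℂ) z := (innerSL ℂ p).differentiableAt
  unfold ballInvolution
  exact DifferentiableAt.differentiableWithinAt (by fun_prop (disch := exact hz))

lemma isOpen_one_sub_inner_ne_zero (p : H) : IsOpen {z | 1 - ⟪p, z⟫_ℂ ≠ 0} :=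
  isOpen_ne_fun (by fun_prop) continuous_const

lemma differentiableOn_ballInvolution_ball (hp : ‖p‖ < 1) :
    DifferentiableOn ℂ (ballInvolution p) (ball 0 1) :=
  (differentiableOn_ballInvolution p).mono fun _ hz =>
    one_sub_inner_ne_zero hp (mem_ball_zero_iff.mp hz).le

lemma mapsTo_ballInvolution (hp : ‖p‖ < 1) : MapsTo (ballInvolution p) (ball 0 1) (ball 0 1) :=
  fun _ hz => mem_ball_zero_iff.mpr (norm_ballInvolution_lt_one hp (mem_ball_zero_iff.mp hz))

lemma isAutomorphismOf_ballInvolution (hp : ‖p‖ < 1) :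
    IsAutomorphismOf (ball (0 : H) 1) (ballInvolution p) :=
  have hinv : ∀ z ∈ ball (0 : H) 1, ballInvolution p (ballInvolution p z) = z := fun _ hz =>
    ballInvolution_ballInvolution hp (mem_ball_zero_iff.mp hz).le
  ⟨differentiableOn_ballInvolution_ball hp, mapsTo_ballInvolution hp, ballInvolution p,
    differentiableOn_ballInvolution_ball hp, mapsTo_ballInvolution hp, hinv, hinv⟩

end BallInvolution

section SchurStep

variable {H : Type*} [NormedAddCommGroup H] [InnerProductSpace ℂ H]

lemma mem_𝔻 {z : ℂ} : z ∈ 𝔻 ↔ ‖z‖ < 1 := mem_ball_zero_iff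

lemma mapsTo_dslope_zero_or_eqOn_const [CompleteSpace H] {f : ℂ → H} (hf : DifferentiableOn ℂ f 𝔻)
    (hfm : MapsTo f 𝔻 (ball 0 1)) (hf₀ : f 0 = 0) :
    MapsTo (dslope f 0) 𝔻 (ball 0 1) ∨ ∃ w, ‖w‖ = 1 ∧ ∀ z ∈ 𝔻, dslope f 0 z = w := by
  have hle : ∀ z ∈ 𝔻, ‖dslope f 0 z‖ ≤ 1 := fun z hz => by
    simpa using norm_dslope_le_div_of_mapsTo_ball hf
      (hf₀ ▸ hfm.mono_right ball_subset_closedBall) hz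
  refine or_iff_not_imp_left.mpr fun hnot => ?_
  obtain ⟨z₀, hz₀, hge⟩ : ∃ z₀ ∈ 𝔻, 1 ≤ ‖dslope f 0 z₀‖ := by
    simpa [MapsTo] using hnot
  have : StrictConvexSpace ℝ H :=
    letI : InnerProductSpace ℝ H := .complexToReal
    inferInstance
  have hdiff : DifferentiableOn ℂ (dslope f 0) 𝔻 :=
    (differentiableOn_dslope (ball_mem_nhds 0 one_pos)).mpr hf
  exact ⟨dslope f 0 z₀, (hle z₀ hz₀).antisymm hge,
    eqOn_of_isPreconnected_of_isMaxOn_norm (convex_ball 0 1).isPreconnected isOpen_ball hdiff hz₀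
      fun z hz => (hle z hz).trans hge⟩

/-- `g` is a quotient of `f` in the sense of the Schur algorithm based at `x`: it is what remains of
`f` after `f x` has been moved to `0` and the zero at `x` has been divided out. -/
def IsSchurQuotient (f : ℂ → H) (x : ℂ) (g : ℂ → H) : Prop :=
  ∀ z ∈ 𝔻, f z = ballInvolution (f x) (ballInvolution x z • g z)

lemma IsSchurQuotient.ballInvolution_apply {f g : ℂ → H} {x z : ℂ} (hg : IsSchurQuotient f x g)
    (hx : ‖x‖ < 1) (hfx : ‖f x‖ < 1) (hz : z ∈ 𝔻) (hgz : ‖g z‖ ≤ 1) :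
    ballInvolution (f x) (f z) = ballInvolution x z • g z := by
  rw [hg z hz, ballInvolution_ballInvolution hfx]
  rw [norm_smul]
  exact mul_le_one₀ (norm_ballInvolution_le_one hx (mem_𝔻.mp hz).le) (norm_nonneg _) hgz

lemma exists_isSchurQuotient [CompleteSpace H] {f : ℂ → H} (hf : DifferentiableOn ℂ f 𝔻)
    (hfm : MapsTo f 𝔻 (ball 0 1)) {x : ℂ} (hx : x ∈ 𝔻) :
    ∃ g : ℂ → H, IsSchurQuotient f x g ∧ DifferentiableOn ℂ g 𝔻 ∧
      (MapsTo g 𝔻 (ball 0 1) ∨ ∃ w, ‖w‖ = 1 ∧ ∀ z ∈ 𝔻, g z = w) := by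
  have hx' := mem_𝔻.mp hx
  have hfx : ‖f x‖ < 1 := mem_ball_zero_iff.mp (hfm hx)
  have hμ : MapsTo (ballInvolution x) 𝔻 𝔻 := mapsTo_ballInvolution hx'
  have hμd : DifferentiableOn ℂ (ballInvolution x) 𝔻 := differentiableOn_ballInvolution_ball hx'
  set F : ℂ → H := ballInvolution (f x) ∘ f ∘ ballInvolution x with hF
  have hFm : MapsTo F 𝔻 (ball 0 1) := (mapsTo_ballInvolution hfx).comp (hfm.comp hμ)
  have hFd : DifferentiableOn ℂ F 𝔻 :=
    (differentiableOn_ballInvolution_ball hfx).comp (hf.comp hμd hμ) (hfm.comp hμ)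
  have hF₀ : F 0 = 0 := by simp [hF, ballInvolution_self hfx]
  have hF_smul (z : ℂ) : F z = z • dslope F 0 z := by
    simpa [hF₀] using (sub_smul_dslope F 0 z).symm
  refine ⟨dslope F 0 ∘ ballInvolution x, fun z hz => ?_, ?_, ?_⟩
  · rw [Function.comp_apply, ← hF_smul]
    simp only [hF, Function.comp_apply]
    rw [ballInvolution_ballInvolution hx' (mem_𝔻.mp hz).le,
      ballInvolution_ballInvolution hfx (mem_ball_zero_iff.mp (hfm hz)).le]
  · exact ((differentiableOn_dslope (ball_mem_nhds 0 one_pos)).mpr hFd).comp hμd hμ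
  · exact (mapsTo_dslope_zero_or_eqOn_const hFd hFm hF₀).imp (fun h => h.comp hμ)
      fun ⟨w, hw, h⟩ => ⟨w, hw, fun z hz => h _ (hμ hz)⟩

-- An interpolant of `g` at the remaining nodes, pushed through the Schur step, interpolates `f`.
lemma ExtSolv.of_isSchurQuotient {m : ℕ} {lam : Fin (m + 1) → ℂ} {f g : ℂ → H}
    (hlam : ∀ j, lam j ∈ 𝔻) (hf : ExtSolv (ball 0 1) lam f) (hfx : ‖f (lam 0)‖ < 1)
    (hg : IsSchurQuotient f (lam 0) g) : ExtSolv (ball 0 1) (Fin.tail lam) g := by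
  rintro ⟨U, h, hU, hUc, hh, hhm, hhg⟩
  set x := lam 0 with hx_def
  have hx : ‖x‖ < 1 := mem_𝔻.mp (hlam 0)
  set k : ℂ → H := fun z => ballInvolution x z • h z with hk
  set V : Set ℂ := U ∩ {z | 1 - inner ℂ x z ≠ 0}
  have hkd : DifferentiableOn ℂ k V :=
    ((differentiableOn_ballInvolution x).mono inter_subset_right).smul (hh.mono inter_subset_left)
  refine hf ⟨V ∩ k ⁻¹' ball 0 1, ballInvolution (f x) ∘ k,
    hkd.continuousOn.isOpen_inter_preimage (hU.inter (isOpen_one_sub_inner_ne_zero x)) isOpen_ball,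
    fun z hz => ?_, ?_, fun z hz => mapsTo_ballInvolution hfx hz.2, fun j => ?_⟩
  · have hz' := mem_closedBall_zero_iff.mp hz
    refine ⟨⟨hUc hz, one_sub_inner_ne_zero hx hz'⟩, mem_ball_zero_iff.mpr ?_⟩
    rw [hk, norm_smul]
    exact mul_lt_one_of_nonneg_of_lt_one_right (norm_ballInvolution_le_one hx hz')
      (norm_nonneg _) (mem_ball_zero_iff.mp (hhm z (hUc hz)))
  · exact (differentiableOn_ballInvolution_ball hfx).comp (hkd.mono inter_subset_left)
      fun z hz => hz.2
  · cases j using Fin.cases with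
    | zero => simp [hk, ← hx_def, ballInvolution_self hx]
    | succ j =>
      have hkj : k (lam j.succ) = ballInvolution x (lam j.succ) • g (lam j.succ) :=
        congrArg _ (hhg j)
      rw [hg _ (hlam j.succ), Function.comp_apply, hkj]

lemma not_extSolv_one {D : Set E} {lam : Fin 1 → ℂ} {f : ℂ → E} (hf : f (lam 0) ∈ D) :
    ¬ ExtSolv D lam f :=
  not_not.mpr ⟨univ, fun _ => f (lam 0), isOpen_univ, subset_univ _, differentiableOn_const _,
    fun _ _ => hf, fun j => by rw [Subsingleton.elim j 0]⟩

end SchurStep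

section Geodesics

open scoped InnerProductSpace ComplexConjugate

variable {H : Type*} [NormedAddCommGroup H] [InnerProductSpace ℂ H]

lemma IsWeakExtremal.exists_isSchurQuotient_const [CompleteSpace H] {lam : Fin 2 → ℂ} {f : ℂ → H}
    (hf : IsWeakExtremal (ball 0 1) lam f) (hlam : ∀ j, lam j ∈ 𝔻) :
    ∃ w, ‖w‖ = 1 ∧ IsSchurQuotient f (lam 0) fun _ => w := by
  obtain ⟨hfd, hfm, hext⟩ := hf
  obtain ⟨g, hg, -, hgm | ⟨w, hw, hgw⟩⟩ := exists_isSchurQuotient hfd hfm (hlam 0)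
  · exact absurd (hext.of_isSchurQuotient hlam (mem_ball_zero_iff.mp (hfm _ (hlam 0))) hg)
      (not_extSolv_one (hgm (hlam 1)))
  · exact ⟨w, hw, fun z hz => by rw [hg z hz, hgw z hz]⟩

lemma eqOn_id_of_two_fixedPoints {u : ℂ → ℂ} (hu : DifferentiableOn ℂ u 𝔻) (hum : MapsTo u 𝔻 𝔻)
    {x y : ℂ} (hx : x ∈ 𝔻) (hy : y ∈ 𝔻) (hxy : x ≠ y) (hux : u x = x) (huy : u y = y) :
    EqOn u id 𝔻 := by
  have hx' := mem_𝔻.mp hx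
  have hy' := mem_𝔻.mp hy
  obtain ⟨g, hg, -, hgm⟩ := exists_isSchurQuotient hu hum hx
  have hgy_le : ‖g y‖ ≤ 1 := by
    rcases hgm with hgm | ⟨w, hw, hgw⟩
    · exact (mem_ball_zero_iff.mp (hgm hy)).le
    · rw [hgw y hy, hw]
  have hgy : g y = 1 := by
    have h := hg.ballInvolution_apply hx' (by rwa [hux]) hy hgy_le
    rw [hux, huy, smul_eq_mul] at h
    exact mul_left_cancel₀ (ballInvolution_ne_zero hx' hy'.le hxy.symm) (by rw [← h, mul_one])
  rcases hgm with hgm | ⟨w, -, hgw⟩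
  · simpa [hgy] using hgm hy
  · intro z hz
    have hgz : g z = 1 := by rw [hgw z hz, ← hgw y hy, hgy]
    simp [hg z hz, hux, hgz, ballInvolution_ballInvolution hx' (mem_𝔻.mp hz).le]

lemma eq_of_fixedPoints_of_closedBall_subset {u : ℂ → ℂ} {U : Set ℂ} (hU : closedBall 0 1 ⊆ U)
    (hu : DifferentiableOn ℂ u U) (hum : MapsTo u U 𝔻) {x y : ℂ} (hx : x ∈ 𝔻) (hy : y ∈ 𝔻)
    (hux : u x = x) (huy : u y = y) : x = y := by
  by_contra hxy
  have h𝔻 : 𝔻 ⊆ U := ball_subset_closedBall.trans hU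
  have hid : EqOn u id (closedBall 0 1) :=
    (eqOn_id_of_two_fixedPoints (hu.mono h𝔻) (hum.mono_left h𝔻) hx hy hxy hux huy).of_subset_closure
      (hu.continuousOn.mono hU) continuousOn_id ball_subset_closedBall
      (closure_ball (0 : ℂ) one_ne_zero).ge
  have h1 : (1 : ℂ) ∈ closedBall 0 1 := by simp
  simpa [𝔻, hid h1] using hum (hU h1)

-- The left inverse `z ↦ φ_x ⟪w, φ_{f x} z⟫` of `f` turns an interpolant of `f` at two nodes into
-- a self-map of the disc fixing both.
lemma IsSchurQuotient.extSolv_of_const {f : ℂ → H} {x : ℂ} {w : H}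
    (hf : IsSchurQuotient f x fun _ => w) (hw : ‖w‖ = 1) (hx : x ∈ 𝔻) (hfx : ‖f x‖ < 1)
    {lam : Fin 2 → ℂ} (hlam : ∀ j, lam j ∈ 𝔻) (hne : lam 0 ≠ lam 1) :
    ExtSolv (ball 0 1) lam f := by
  rintro ⟨U, h, -, hU, hh, hhm, hhf⟩
  have hx' := mem_𝔻.mp hx
  have hinner_maps : MapsTo (fun z : H => ⟪w, z⟫_ℂ) (ball 0 1) 𝔻 := fun z hz => by
    refine mem_𝔻.mpr ((norm_inner_le_norm w z).trans_lt ?_)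
    simpa [hw] using hz
  set L : H → ℂ := ballInvolution x ∘ (fun z => ⟪w, z⟫_ℂ) ∘ ballInvolution (f x) with hL
  have hLm : MapsTo L (ball 0 1) 𝔻 :=
    (mapsTo_ballInvolution hx').comp (hinner_maps.comp (mapsTo_ballInvolution hfx))
  have hLd : DifferentiableOn ℂ L (ball 0 1) :=
    (differentiableOn_ballInvolution_ball hx').comp
      ((innerSL ℂ w).differentiable.comp_differentiableOn
        (differentiableOn_ballInvolution_ball hfx))
      (hinner_maps.comp (mapsTo_ballInvolution hfx))
  have hLf : ∀ z ∈ 𝔻, L (f z) = z := fun z hz => by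
    simp only [hL, Function.comp_apply]
    rw [hf.ballInvolution_apply hx' hfx hz hw.le, inner_smul_right, inner_self_eq_norm_sq_to_K, hw]
    simpa using ballInvolution_ballInvolution hx' (mem_𝔻.mp hz).le
  have hfix (j : Fin 2) : (L ∘ h) (lam j) = lam j := by
    rw [Function.comp_apply, hhf, hLf _ (hlam j)]
  exact hne (eq_of_fixedPoints_of_closedBall_subset hU (hLd.comp hh hhm) (hLm.comp hhm) (hlam 0)
    (hlam 1) (hfix 0) (hfix 1))

lemma IsSchurQuotient.isMExtremal_two {f : ℂ → H} {x : ℂ} {w : H}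
    (hf : IsSchurQuotient f x fun _ => w) (hw : ‖w‖ = 1) (hx : x ∈ 𝔻)
    (hfd : DifferentiableOn ℂ f 𝔻) (hfm : ∀ z ∈ 𝔻, f z ∈ ball 0 1) :
    IsMExtremal (ball 0 1) 2 f :=
  ⟨hfd, hfm, fun _ hinj hlam =>
    hf.extSolv_of_const hw hx (mem_ball_zero_iff.mp (hfm x hx)) hlam (hinj.ne (by decide))⟩

-- The disc `η ↦ φ_p (η • w)` is affine; `η = conj ⟪p, w⟫` is the parameter of its point closest to
-- the origin.
lemma one_sub_inner_ballInvolution_conj_inner_smul {p w : H} (hp : ‖p‖ < 1) (hw : ‖w‖ = 1) {η : ℂ}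
    (hη : ‖η‖ ≤ 1) :
    1 - ⟪ballInvolution p (conj ⟪p, w⟫_ℂ • w), ballInvolution p (η • w)⟫_ℂ =
      (1 - ⟪p, p⟫_ℂ) / (1 - ⟪p, w⟫_ℂ * conj ⟪p, w⟫_ℂ) := by
  have hη' : 1 - ⟪p, η • w⟫_ℂ ≠ 0 :=
    one_sub_inner_ne_zero hp (by simpa [norm_smul, hw] using hη)
  have hc : ‖conj ⟪p, w⟫_ℂ • w‖ ≤ 1 := by
    rw [norm_smul, RCLike.norm_conj, hw, mul_one]
    exact (norm_inner_le_norm p w).trans (by simpa [hw] using hp.le)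
  have hc' : 1 - ⟪conj ⟪p, w⟫_ℂ • w, p⟫_ℂ ≠ 0 := by
    have h := (map_ne_zero (starRingEnd ℂ)).mpr (one_sub_inner_ne_zero hp hc)
    rwa [map_sub, map_one, inner_conj_symm] at h
  have hww : ⟪w, w⟫_ℂ = 1 := by simp [inner_self_eq_norm_sq_to_K, hw]
  rw [one_sub_inner_ballInvolution hp.le hc' hη']
  simp only [inner_smul_left, inner_smul_right, hww, conj_conj, mul_one,
    ← inner_conj_symm w p] at hη' hc' ⊢
  rw [mul_comm η] at hη' ⊢
  field_simp

lemma inner_eq_zero_of_inner_ballInvolution_eq {p z : H} (hp : ‖p‖ < 1) (hz : ‖z‖ ≤ 1)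
    (h : ⟪p, ballInvolution p z⟫_ℂ = ⟪p, p⟫_ℂ) : ⟪p, z⟫_ℂ = 0 := by
  have hD := one_sub_inner_ne_zero hp hz
  have hpp := one_sub_inner_ne_zero hp hp.le
  have key := one_sub_inner_self_ballInvolution hp.le hD
  rw [h, eq_div_iff hD, mul_eq_left₀ hpp] at key
  simpa using key

lemma IsSchurQuotient.exists_inner_eq_inner_self {f : ℂ → H} {x : ℂ} {w : H}
    (hf : IsSchurQuotient f x fun _ => w) (hw : ‖w‖ = 1) (hx : x ∈ 𝔻) (hfx : ‖f x‖ < 1) :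
    ∃ α ∈ 𝔻, ∀ z ∈ 𝔻, ⟪f α, f z⟫_ℂ = ⟪f α, f α⟫_ℂ := by
  have hx' := mem_𝔻.mp hx
  set c : ℂ := ⟪f x, w⟫_ℂ
  have hc : ‖conj c‖ < 1 := by
    rw [RCLike.norm_conj]
    exact (norm_inner_le_norm (f x) w).trans_lt (by simpa [hw] using hfx)
  set α := ballInvolution x (conj c)
  have hα : α ∈ 𝔻 := mem_𝔻.mpr (norm_ballInvolution_lt_one hx' hc)
  have hfα : f α = ballInvolution (f x) (conj c • w) := by
    rw [hf α hα, ballInvolution_ballInvolution hx' hc.le]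
  have h {η : ℂ} (hη : ‖η‖ ≤ 1) := one_sub_inner_ballInvolution_conj_inner_smul hfx hw hη
  refine ⟨α, hα, fun z hz => ?_⟩
  rw [← sub_right_inj (a := 1), hf z hz, hfα,
    h (norm_ballInvolution_le_one hx' (mem_𝔻.mp hz).le), h hc.le]

lemma exists_mem_𝔻_ne (α : ℂ) : ∃ y ∈ 𝔻, y ≠ α :=
  Set.Nontrivial.exists_ne ⟨0, by simp [𝔻], 1 / 2, mem_𝔻.mpr (by norm_num), by norm_num⟩ α

lemma IsWeakExtremal.exists_isSchurQuotient_const_of_mem [CompleteSpace H] {lam : Fin 2 → ℂ}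
    {f : ℂ → H} (hf : IsWeakExtremal (ball 0 1) lam f) (hlam : ∀ j, lam j ∈ 𝔻) {α : ℂ}
    (hα : α ∈ 𝔻) : ∃ v, ‖v‖ = 1 ∧ IsSchurQuotient f α fun _ => v := by
  obtain ⟨w, hw, hfw⟩ := hf.exists_isSchurQuotient_const hlam
  obtain ⟨hfd, hfm, -⟩ := hf
  obtain ⟨y, hy, hyα⟩ := exists_mem_𝔻_ne α
  have hmem : ∀ j, (![α, y] : Fin 2 → ℂ) j ∈ 𝔻 := by simp [Fin.forall_fin_two, hα, hy]
  have hext : ExtSolv (ball 0 1) ![α, y] f :=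
    hfw.extSolv_of_const hw (hlam 0) (mem_ball_zero_iff.mp (hfm _ (hlam 0))) hmem hyα.symm
  exact IsWeakExtremal.exists_isSchurQuotient_const ⟨hfd, hfm, hext⟩ hmem

lemma IsWeakExtremal.exists_eq_add_smul [CompleteSpace H] {lam : Fin 2 → ℂ} {f : ℂ → H}
    (hf : IsWeakExtremal (ball 0 1) lam f) (hlam : ∀ j, lam j ∈ 𝔻) :
    ∃ α ∈ 𝔻, ∃ b : H, ⟪f α, b⟫_ℂ = 0 ∧ ‖f α‖ ^ 2 + ‖b‖ ^ 2 = 1 ∧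
      ∀ z ∈ 𝔻, f z = f α + ballInvolution α z • b := by
  have hnorm {z : ℂ} (hz : z ∈ 𝔻) : ‖f z‖ < 1 := mem_ball_zero_iff.mp (hf.2.1 z hz)
  obtain ⟨w, hw, hfw⟩ := hf.exists_isSchurQuotient_const hlam
  obtain ⟨α, hα, hperp⟩ := hfw.exists_inner_eq_inner_self hw (hlam 0) (hnorm (hlam 0))
  obtain ⟨v, hv, hfv⟩ := hf.exists_isSchurQuotient_const_of_mem hlam hα
  have hαv : ⟪f α, v⟫_ℂ = 0 := by
    obtain ⟨y, hy, hyα⟩ := exists_mem_𝔻_ne α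
    have hα' := mem_𝔻.mp hα
    have hy' := (mem_𝔻.mp hy).le
    have h := inner_eq_zero_of_inner_ballInvolution_eq (z := ballInvolution α y • v) (hnorm hα)
      (by simpa [norm_smul, hv] using norm_ballInvolution_le_one hα' hy')
      (by rw [← hfv y hy, hperp y hy])
    rw [inner_smul_right] at h
    exact (mul_eq_zero.mp h).resolve_left (ballInvolution_ne_zero hα' hy' hyα)
  have hsq : 0 ≤ 1 - ‖f α‖ ^ 2 := by nlinarith [hnorm hα, norm_nonneg (f α)]
  refine ⟨α, hα, -(√(1 - ‖f α‖ ^ 2) : ℂ) • v, ?_, ?_, fun z hz => ?_⟩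
  · rw [inner_smul_right, hαv, mul_zero]
  · rw [norm_smul, hv, norm_neg, norm_real, mul_one, Real.norm_eq_abs, sq_abs, Real.sq_sqrt hsq]
    ring
  · rw [hfv z hz, ballInvolution_of_inner_eq_zero (by rw [inner_smul_right, hαv, mul_zero])]
    module

end Geodesics

section UnitaryNormalization

open scoped InnerProductSpace

lemma IsAutomorphismOf.comp {D : Set E} {φ ψ : E → E} (hφ : IsAutomorphismOf D φ)
    (hψ : IsAutomorphismOf D ψ) : IsAutomorphismOf D (φ ∘ ψ) := by
  obtain ⟨hφd, hφm, φ', hφ'd, hφ'm, hφ'φ, hφφ'⟩ := hφ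
  obtain ⟨hψd, hψm, ψ', hψ'd, hψ'm, hψ'ψ, hψψ'⟩ := hψ
  refine ⟨hφd.comp hψd hψm, hφm.comp hψm, ψ' ∘ φ', hψ'd.comp hφ'd hφ'm, hψ'm.comp hφ'm,
    fun z hz => ?_, fun z hz => ?_⟩
  · simp [hφ'φ _ (hψm hz), hψ'ψ z hz]
  · simp [hψψ' _ (hφ'm hz), hφφ' z hz]

lemma isAutomorphismOf_ball_linearIsometryEquiv (U : E ≃ₗᵢ[ℂ] E) :
    IsAutomorphismOf (ball (0 : E) 1) U :=
  ⟨U.toContinuousLinearEquiv.differentiable.differentiableOn, fun z hz => by simpa using hz,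
    U.symm, U.symm.toContinuousLinearEquiv.differentiable.differentiableOn,
    fun z hz => by simpa using hz, fun z _ => U.symm_apply_apply z, fun z _ => U.apply_symm_apply z⟩

lemma exists_orthonormalBasis_eq_norm_smul {𝕜 F ι : Type*} [RCLike 𝕜] [NormedAddCommGroup F]
    [InnerProductSpace 𝕜 F] [FiniteDimensional 𝕜 F] [Fintype ι]
    (hι : Module.finrank 𝕜 F = Fintype.card ι) {v : ι → F}
    (hv : Pairwise fun i j => ⟪v i, v j⟫_𝕜 = 0) :
    ∃ B : OrthonormalBasis ι 𝕜 F, ∀ i, v i = (‖v i‖ : 𝕜) • B i := by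
  let S : Set ι := {i | v i ≠ 0}
  have hS : Orthonormal 𝕜 (S.domRestrict fun i => (‖v i‖ : 𝕜)⁻¹ • v i) := by
    refine ⟨fun i => ?_, fun i j hij => ?_⟩
    · simpa using norm_smul_inv_norm (𝕜 := 𝕜) i.2
    · simp [inner_smul_left, inner_smul_right, hv (Subtype.coe_ne_coe.mpr hij)]
  obtain ⟨B, hB⟩ := hS.exists_orthonormalBasis_extension_of_card_eq hι
  refine ⟨B, fun i => ?_⟩
  by_cases hi : v i = 0
  · simp [hi]
  · rw [hB i hi, smul_inv_smul₀ (by simpa using hi)]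

lemma exists_isAutomorphismOf_ball_single_add_single {ι : Type*} [Fintype ι] [DecidableEq ι]
    {i j : ι} (hij : i ≠ j) {a b : EuclideanSpace ℂ ι} (hab : ⟪a, b⟫_ℂ = 0) :
    ∃ φ : EuclideanSpace ℂ ι → EuclideanSpace ℂ ι, IsAutomorphismOf (ball 0 1) φ ∧
      ∀ c d : ℂ, φ (EuclideanSpace.single i (‖a‖ * c) + EuclideanSpace.single j (‖b‖ * d)) =
        c • a + d • b := by
  set v : ι → EuclideanSpace ℂ ι := Pi.single i a + Pi.single j b with hv_def
  have hv : Pairwise fun k l => ⟪v k, v l⟫_ℂ = 0 := fun k l hkl => by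
    have hba := inner_eq_zero_symm.mp hab
    simp only [hv_def, Pi.add_apply, Pi.single_apply]
    split_ifs <;> simp_all
  obtain ⟨B, hB⟩ := exists_orthonormalBasis_eq_norm_smul (by simp) hv
  have ha : a = (‖a‖ : ℂ) • B i := by simpa [v, hij] using hB i
  have hb : b = (‖b‖ : ℂ) • B j := by simpa [v, hij.symm] using hB j
  have hsingle (k : ι) (c : ℂ) : B.repr.symm (EuclideanSpace.single k c) = c • B k := by
    rw [← B.repr_symm_single, ← map_smul]
    congr 1
    ext l
    simp
  refine ⟨B.repr.symm, isAutomorphismOf_ball_linearIsometryEquiv _, fun c d => ?_⟩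
  rw [map_add, hsingle, hsingle]
  conv_rhs => rw [ha, hb]
  module

end UnitaryNormalization

lemma IsMExtremal.exists_isWeakExtremal {D : Set E} {m : ℕ} [NeZero m] {f : ℂ → E}
    (hf : IsMExtremal D m f) :
    ∃ lam : Fin m → ℂ, lam 0 = 0 ∧ (∀ j, lam j ∈ 𝔻) ∧ IsWeakExtremal D lam f := by
  have hm : (m : ℂ) ≠ 0 := NeZero.ne _
  let lam : Fin m → ℂ := fun j => (j : ℕ) / m
  have hinj : Function.Injective lam := fun i j hij => by
    simpa [lam, Fin.ext_iff, div_left_inj' hm] using hij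
  have hmem (j : Fin m) : lam j ∈ 𝔻 := by
    have hj : (j : ℝ) < m := by exact_mod_cast j.is_lt
    rw [mem_𝔻, norm_div, norm_natCast, norm_natCast]
    exact (div_lt_one (j.val.cast_nonneg.trans_lt hj)).mpr hj
  exact ⟨lam, by simp [lam], hmem, hf.1, hf.2.1, hf.2.2 lam hinj hmem⟩

theorem stmt7_general {H : Type*} [NormedAddCommGroup H] [InnerProductSpace ℂ H] [CompleteSpace H]
    (f : ℂ → H) (lam : Fin 3 → ℂ) (hlam : ∀ j, lam j ∈ 𝔻)
    (h3 : IsWeakExtremal (ball 0 1) lam f) (h2 : ¬ IsMExtremal (ball 0 1) 2 f) :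
    ∃ φ : H → H, IsAutomorphismOf (ball 0 1) φ ∧
      ∃ a b : H, inner ℂ a b = 0 ∧ ‖a‖ < 1 ∧ ‖a‖ ^ 2 + ‖b‖ ^ 2 = 1 ∧ ∃ α ∈ 𝔻,
        ∀ z ∈ 𝔻, f z =
          φ (ballInvolution (lam 0) z • (a + ballInvolution α z • b)) := by
  obtain ⟨hfd, hfm, hext⟩ := h3
  have hfx : ‖f (lam 0)‖ < 1 := mem_ball_zero_iff.mp (hfm _ (hlam 0))
  obtain ⟨g, hg, hgd, hgm | ⟨w, hw, hgw⟩⟩ := exists_isSchurQuotient hfd hfm (hlam 0)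
  · have hg2 : IsWeakExtremal (ball 0 1) (Fin.tail lam) g :=
      ⟨hgd, hgm, hext.of_isSchurQuotient hlam hfx hg⟩
    obtain ⟨α, hα, b, hab, hnorm, hgα⟩ := hg2.exists_eq_add_smul fun j => hlam j.succ
    exact ⟨ballInvolution (f (lam 0)), isAutomorphismOf_ballInvolution hfx, g α, b, hab,
      mem_ball_zero_iff.mp (hgm hα), hnorm, α, hα, fun z hz => by rw [hg z hz, ← hgα z hz]⟩
  · have hconst : IsSchurQuotient f (lam 0) fun _ => w := fun z hz => by rw [hg z hz, hgw z hz]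
    exact absurd (hconst.isMExtremal_two hw (hlam 0) hfd hfm) h2

theorem stmt7 {n : ℕ} (hn : 2 ≤ n) (f : ℂ → EuclideanSpace ℂ (Fin n))
    (h3 : IsMExtremal (Metric.ball (0 : EuclideanSpace ℂ (Fin n)) 1) 3 f)
    (h2 : ¬ IsMExtremal (Metric.ball (0 : EuclideanSpace ℂ (Fin n)) 1) 2 f) :
    ∃ φ : EuclideanSpace ℂ (Fin n) → EuclideanSpace ℂ (Fin n),
      IsAutomorphismOf (Metric.ball (0 : EuclideanSpace ℂ (Fin n)) 1) φ ∧
      ∃ a₁ : ℝ, 0 ≤ a₁ ∧ a₁ < 1 ∧ ∃ ω α : ℂ, ‖ω‖ = 1 ∧ α ∈ 𝔻 ∧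
        ∀ z ∈ 𝔻, f z =
          φ (EuclideanSpace.single (⟨0, by omega⟩ : Fin n) ((a₁ : ℂ) * z) +
             EuclideanSpace.single (⟨1, by omega⟩ : Fin n)
               (((Real.sqrt (1 - a₁ ^ 2) : ℝ) : ℂ) * z *
                 (ω * (α - z) / (1 - (starRingEnd ℂ) α * z)))) := by
  obtain ⟨lam, hlam₀, hlam, hweak⟩ := h3.exists_isWeakExtremal
  obtain ⟨φ, hφ, a, b, hab, ha, hnorm, α, hα, hf⟩ := stmt7_general f lam hlam hweak h2
  obtain ⟨ψ, hψ, hψab⟩ := exists_isAutomorphismOf_ball_single_add_single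
    (i := (⟨0, by omega⟩ : Fin n)) (j := ⟨1, by omega⟩) (by simp) (a := -a) (b := -b) (by simpa)
  have hsqrt : √(1 - ‖a‖ ^ 2) = ‖b‖ := by
    rw [← hnorm, add_sub_cancel_left, Real.sqrt_sq (norm_nonneg b)]
  refine ⟨φ ∘ ψ, hφ.comp hψ, ‖a‖, norm_nonneg a, ha, 1, α, norm_one, hα, fun z hz => ?_⟩
  rw [hf z hz, hlam₀, ballInvolution_zero_left, ballInvolution_complex (mem_𝔻.mp hα).le, hsqrt,
    Function.comp_apply, mul_assoc, ← norm_neg a, ← norm_neg b, hψab, one_mul]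
  congr 1
  module

end
end

section
/- Let k ≥ 3, a₁ ∈ (0,1), and f(λ) = (a₁λᵏ, √(1−a₁²)λ^{k+1}) ∈ 𝔹₂. There is no holomorphic F : 𝔹₂ → 𝔻 with F(0)=0 such that F ∘ f is a non-constant Blaschke product of degree at most k+1. Consequently f, which is (k+2)-extremal in 𝔹₂, is not a (k+2)-complex geodesic. -/
open Complex Metric Set

noncomputable section

variable {E : Type*} [NormedAddCommGroup E] [NormedSpace ℂ E]

/-- The disc `λ ↦ (a₁λᵏ, √(1-a₁²)λ^{k+1})` in `ℂ²`. -/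
def f10 (k : ℕ) (a₁ : ℝ) : ℂ → EuclideanSpace ℂ (Fin 2) := fun z =>
  EuclideanSpace.single (0 : Fin 2) ((a₁ : ℂ) * z ^ k) +
    EuclideanSpace.single (1 : Fin 2) (((Real.sqrt (1 - a₁ ^ 2) : ℝ) : ℂ) * z ^ (k + 1))

/-!
If `Φ` is holomorphic on the disc, `Φ 0 = 0` and `Re Φ ≥ 0` on the circle, then `Re Φ = 0` on the
circle, by the maximum principle for `exp (-Φ)`. This is used twice, with `f` written as
`f z = z ^ k • (v + z • w)`, where `v ⊥ w` and `‖v‖ ^ 2 + ‖w‖ ^ 2 = 1`.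

Let `B` be a Blaschke product of degree `n` with denominator `D`. On the circle,
`D ^ 2 * (B - h) / z ^ n` is `|D| ^ 2 * (1 - conj B * h)` up to a unimodular constant, so a
holomorphic `h` bounded by `1` with `B - h = O(z ^ (n + 1))` equals `B` on the circle. If
`F ∘ f = B`, take for `h` the composition of `f` with the Möbius image of a linear form `L`,
`‖L‖ ≤ 1`, that agrees with `F` up to an error `O(‖x‖ ^ 2)`. As `f` vanishes to order `k`,
`B - h = O(z ^ (2 * k))` with `2 * k > n`. So `|L v + z * L w| = 1` on the circle, which forces
`|L v| = 1` or `|L w| = 1`, although `‖v‖, ‖w‖ < 1`.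

If `g` interpolates `f` at `k + 2` points, then on the circle `z ^ (k + 1) * ⟪f, f - g⟫` is a
holomorphic function with `k + 2` zeros. Dividing these out turns `⟪f, f - g⟫` into a positive
multiple of some `Φ` with `Φ 0 = 0`, although its real part is positive.
-/

open Asymptotics
open scoped ComplexConjugate Topology InnerProductSpace

lemma re_eq_zero_on_sphere_of_re_nonneg {Φ : ℂ → ℂ} {c : ℂ} {R : ℝ} (hR : R ≠ 0)
    (hΦ : DiffContOnCl ℂ Φ (ball c R)) (hc : Φ c = 0) (hre : ∀ z ∈ sphere c R, 0 ≤ (Φ z).re) :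
    ∀ z ∈ sphere c R, (Φ z).re = 0 := by
  intro z hz
  have hΨ : DiffContOnCl ℂ (fun w ↦ exp (-Φ w)) (ball c R) :=
    differentiable_exp.comp_diffContOnCl hΦ.neg
  have hle : ∀ w ∈ ball c R, ‖exp (-Φ w)‖ ≤ 1 := fun w hw ↦
    norm_le_of_forall_mem_frontier_norm_le isBounded_ball hΨ
      (fun x hx ↦ by
        rw [frontier_ball c hR] at hx
        simpa [norm_exp] using hre x hx)
      (subset_closure hw)
  have hmax : IsMaxOn (norm ∘ fun w ↦ exp (-Φ w)) (ball c R) c := fun w hw ↦ by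
    simpa [hc] using hle w hw
  have hnorm : ‖exp (-Φ z)‖ = 1 := by
    simpa [hc] using norm_eqOn_closedBall_of_isMaxOn hΨ hmax (sphere_subset_closedBall hz)
  simpa [norm_exp] using hnorm

lemma exists_eq_prod_sub_mul_of_eq_zero {ι : Type*} {lam : ι → ℂ} {s : Set ℂ} {S : Finset ι}
    (hlam : InjOn lam S) {ψ : ℂ → ℂ} (hψ : DifferentiableOn ℂ ψ s)
    (hs : ∀ i ∈ S, s ∈ 𝓝 (lam i)) (hzero : ∀ i ∈ S, ψ (lam i) = 0) :
    ∃ r : ℂ → ℂ, DifferentiableOn ℂ r s ∧ ∀ z, ψ z = (∏ i ∈ S, (z - lam i)) * r z := by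
  classical
  induction S using Finset.induction_on generalizing ψ with
  | empty => exact ⟨ψ, hψ, by simp⟩
  | insert i S hiS ih =>
    simp only [Finset.forall_mem_insert] at hs hzero
    have hfac : ∀ z, ψ z = (z - lam i) * dslope ψ (lam i) z := fun z ↦ by
      simpa [hzero.1] using (sub_smul_dslope ψ (lam i) z).symm
    have hzero' : ∀ j ∈ S, dslope ψ (lam i) (lam j) = 0 := fun j hj ↦ by
      have hne : lam j - lam i ≠ 0 := sub_ne_zero.2 (hlam.ne (Finset.mem_insert_of_mem hj)
        (Finset.mem_insert_self i S) (ne_of_mem_of_not_mem hj hiS))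
      exact (mul_eq_zero.1 ((hfac (lam j)).symm.trans (hzero.2 j hj))).resolve_left hne
    obtain ⟨r, hr, hr'⟩ := ih (hlam.mono (Finset.coe_subset.2 (Finset.subset_insert i S)))
      ((differentiableOn_dslope hs.1).2 hψ) hs.2 hzero'
    exact ⟨r, hr, fun z ↦ by rw [hfac, hr', Finset.prod_insert hiS, mul_assoc]⟩

lemma pow_isBigO_pow_of_le {p q : ℕ} (hpq : p ≤ q) :
    (fun z : ℂ ↦ z ^ q) =O[𝓝 0] fun z ↦ z ^ p := by
  simpa only [← pow_add, Nat.add_sub_cancel' hpq, mul_one] using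
    (isBigO_refl (fun z : ℂ ↦ z ^ p) (𝓝 0)).mul
      ((continuous_pow (M := ℂ) (q - p)).continuousAt.isBigO_one ℂ)

lemma div_pow_isBigO_id {ψ : ℂ → ℂ} {n : ℕ} (hO : ψ =O[𝓝 0] fun z ↦ z ^ (n + 1)) :
    (fun z ↦ ψ z / z ^ n) =O[𝓝 0] fun z ↦ z := by
  have hpow : ∀ z : ℂ, z ^ (n + 1) * (z ^ n)⁻¹ = z := fun z ↦ by
    rcases eq_or_ne z 0 with rfl | hz
    · simp
    · rw [pow_succ', mul_inv_cancel_right₀ (pow_ne_zero n hz)]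
  simpa only [div_eq_mul_inv, hpow] using hO.mul (isBigO_refl (fun z : ℂ ↦ (z ^ n)⁻¹) (𝓝 0))

-- At `0` the convention `x / 0 = 0` gives the quotient its limit value.
lemma differentiableOn_div_pow_of_isBigO {s : Set ℂ} (hs : s ∈ 𝓝 0) {ψ : ℂ → ℂ} {n : ℕ}
    (hψ : DifferentiableOn ℂ ψ s) (hO : ψ =O[𝓝 0] fun z ↦ z ^ (n + 1)) :
    DifferentiableOn ℂ (fun z ↦ ψ z / z ^ n) s := by
  have hO' := div_pow_isBigO_id hO
  rw [← differentiableOn_compl_singleton_and_continuousAt_iff hs]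
  refine ⟨(hψ.mono sdiff_subset).div (by fun_prop) fun z hz ↦ pow_ne_zero n hz.2, ?_⟩
  rw [ContinuousAt, hO'.eq_zero_imp.self_of_nhds rfl]
  exact hO'.trans_tendsto Filter.tendsto_id

lemma eq_one_of_norm_le_one_of_re_eq_one {z : ℂ} (hz : ‖z‖ ≤ 1) (hre : z.re = 1) : z = 1 := by
  have him : z.im = 0 := abs_re_eq_norm.1 (le_antisymm (abs_re_le_norm z) (by simpa [hre]))
  exact Complex.ext hre him

lemma one_sub_conj_mul_ne_zero_s10 {a z : ℂ} (ha : ‖a‖ < 1) (hz : ‖z‖ ≤ 1) : 1 - conj a * z ≠ 0 := by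
  intro h
  have hlt : ‖conj a * z‖ < 1 := by
    rw [norm_mul, norm_conj]
    exact mul_lt_one_of_nonneg_of_lt_one_left (norm_nonneg a) ha hz
  rw [← sub_eq_zero.1 h, norm_one] at hlt
  exact lt_irrefl 1 hlt

section Mobius

/-- The automorphism of the unit disc taking `p` to `0`. Its inverse is `mobius (-p)`. -/
def mobius (p z : ℂ) : ℂ := (z - p) / (1 - conj p * z)

variable {p z : ℂ}

lemma normSq_sub_normSq_mobius_numerator (p z : ℂ) :
    normSq (1 - conj p * z) - normSq (z - p) = (1 - normSq p) * (1 - normSq z) := by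
  simp only [normSq_apply, sub_re, sub_im, mul_re, mul_im, conj_re, conj_im, one_re, one_im]
  ring

lemma one_sub_normSq_mobius (hp : ‖p‖ < 1) (hz : ‖z‖ ≤ 1) :
    1 - normSq (mobius p z) = (1 - normSq p) * (1 - normSq z) / normSq (1 - conj p * z) := by
  have hne : normSq (1 - conj p * z) ≠ 0 := normSq_eq_zero.not.2 (one_sub_conj_mul_ne_zero_s10 hp hz)
  rw [mobius, normSq_div, ← normSq_sub_normSq_mobius_numerator, sub_div, div_self hne]

lemma norm_mobius_le_one (hp : ‖p‖ < 1) (hz : ‖z‖ ≤ 1) : ‖mobius p z‖ ≤ 1 := by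
  have hp' : normSq p ≤ 1 := normSq_eq_norm_sq p ▸ pow_le_one₀ (norm_nonneg p) hp.le
  have hz' : normSq z ≤ 1 := normSq_eq_norm_sq z ▸ pow_le_one₀ (norm_nonneg z) hz
  have h : 0 ≤ 1 - normSq (mobius p z) := by
    rw [one_sub_normSq_mobius hp hz]
    exact div_nonneg (mul_nonneg (sub_nonneg.2 hp') (sub_nonneg.2 hz')) (normSq_nonneg _)
  rw [normSq_eq_norm_sq, sub_nonneg] at h
  exact (sq_le_one_iff₀ (norm_nonneg _)).1 h

lemma norm_eq_one_of_norm_mobius_eq_one (hp : ‖p‖ < 1) (hz : ‖z‖ ≤ 1) (h : ‖mobius p z‖ = 1) :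
    ‖z‖ = 1 := by
  have hne : normSq (1 - conj p * z) ≠ 0 := normSq_eq_zero.not.2 (one_sub_conj_mul_ne_zero_s10 hp hz)
  have hp' : 1 - normSq p ≠ 0 := by
    rw [normSq_eq_norm_sq]
    exact (sub_pos.2 (pow_lt_one₀ (norm_nonneg p) hp two_ne_zero)).ne'
  have hprod : (1 - normSq p) * (1 - normSq z) = 0 := by
    have h0 := one_sub_normSq_mobius hp hz
    rw [normSq_eq_norm_sq (mobius p z), h, one_pow, sub_self] at h0
    exact (div_eq_zero_iff.1 h0.symm).resolve_right hne
  have hz' : ‖z‖ ^ 2 = 1 :=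
    normSq_eq_norm_sq z ▸ (sub_eq_zero.1 ((mul_eq_zero.1 hprod).resolve_left hp')).symm
  exact (pow_eq_one_iff_of_nonneg (norm_nonneg z) two_ne_zero).1 hz'

lemma mobius_neg_mobius (hp : ‖p‖ < 1) (hz : ‖z‖ ≤ 1) : mobius (-p) (mobius p z) = z := by
  have hpz := one_sub_conj_mul_ne_zero_s10 hp hz
  have hpp := one_sub_conj_mul_ne_zero_s10 hp hp.le
  have hnum : mobius p z - -p = z * (1 - conj p * p) / (1 - conj p * z) := by
    rw [mobius, sub_neg_eq_add, div_add' _ _ _ hpz]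
    congr 1
    ring
  have hden : 1 - conj (-p) * mobius p z = (1 - conj p * p) / (1 - conj p * z) := by
    rw [mobius, map_neg, neg_mul, sub_neg_eq_add, mul_div_assoc', one_add_div hpz]
    congr 1
    ring
  rw [mobius, hnum, hden, div_div_div_cancel_right₀ hpz, mul_div_cancel_right₀ _ hpp]

lemma differentiableAt_mobius (hp : ‖p‖ < 1) (hz : ‖z‖ ≤ 1) : DifferentiableAt ℂ (mobius p) z := by
  unfold mobius
  exact (by fun_prop : DifferentiableAt ℂ (fun z ↦ z - p) z).div (by fun_prop)
    (one_sub_conj_mul_ne_zero_s10 hp hz)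

lemma isBigO_mobius_sub_mobius {α : Type*} {l : Filter α} {u v : α → ℂ} (p : ℂ)
    (hu : Filter.Tendsto u l (𝓝 0)) (hv : Filter.Tendsto v l (𝓝 0)) :
    (fun x ↦ mobius p (u x) - mobius p (v x)) =O[l] fun x ↦ u x - v x := by
  have hmob : ContDiffAt ℂ 1 (mobius p) 0 := by
    unfold mobius
    exact (by fun_prop : ContDiffAt ℂ 1 (fun z ↦ z - p) 0).div (by fun_prop) (by simp)
  exact (hmob.hasStrictFDerivAt one_ne_zero).isBigO_sub.comp_tendsto (hu.prodMk_nhds hv)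

end Mobius

lemma isBigO_sq_sub_fderiv {F : Type*} [NormedAddCommGroup F] [NormedSpace ℂ F] {G : E → F}
    {R : ℝ} (hG : DifferentiableOn ℂ G (ball 0 1)) (hR : MapsTo G (ball 0 1) (closedBall 0 R))
    (h0 : G 0 = 0) : (fun x ↦ G x - fderiv ℂ G 0 x) =O[𝓝 0] fun x ↦ ‖x‖ ^ 2 := by
  set L := fderiv ℂ G 0
  have hdiff : HasFDerivAt G L 0 := (hG.differentiableAt (ball_mem_nhds 0 one_pos)).hasFDerivAt
  have hmaps : MapsTo (fun x ↦ G x - L x) (ball 0 1) (closedBall 0 (R + ‖L‖)) := fun x hx ↦ by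
    have hGx : ‖G x‖ ≤ R := mem_closedBall_zero_iff.1 (hR hx)
    have hLx : ‖L x‖ ≤ ‖L‖ := L.unit_le_opNorm x (mem_ball_zero_iff.1 hx).le
    exact mem_closedBall_zero_iff.2 ((norm_sub_le _ _).trans (add_le_add hGx hLx))
  refine IsBigO.of_bound (R + ‖L‖) ?_
  filter_upwards [ball_mem_nhds (0 : E) one_pos] with x hx
  simpa [h0] using dist_le_mul_div_pow_of_mapsTo_ball_of_isLittleO (n := 1)
    (f := fun x ↦ G x - L x) (c := 0) (hG.sub L.differentiableOn) (by simpa [h0] using hmaps)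
    (by simpa [h0] using hdiff.isLittleO.norm_right) hx

lemma exists_clm_isBigO_sub_mobius {F : E → ℂ} (hF : DifferentiableOn ℂ F (ball 0 1))
    (hmaps : MapsTo F (ball 0 1) (ball 0 1)) :
    ∃ L : E →L[ℂ] ℂ, ‖L‖ ≤ 1 ∧ (fun x ↦ F x - mobius (-F 0) (L x)) =O[𝓝 0] fun x ↦ ‖x‖ ^ 2 := by
  have hlt : ∀ x ∈ ball (0 : E) 1, ‖F x‖ < 1 := fun x hx ↦ mem_ball_zero_iff.1 (hmaps hx)
  have hp : ‖F 0‖ < 1 := hlt 0 (mem_ball_self one_pos)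
  set G : E → ℂ := fun x ↦ mobius (F 0) (F x)
  have hG : DifferentiableOn ℂ G (ball 0 1) := fun x hx ↦
    (differentiableAt_mobius hp (hlt x hx).le).comp_differentiableWithinAt x (hF x hx)
  have hG1 : MapsTo G (ball 0 1) (closedBall 0 1) := fun x hx ↦
    mem_closedBall_zero_iff.2 (norm_mobius_le_one hp (hlt x hx).le)
  have hG0 : G 0 = 0 := by simp [G, mobius]
  have hGtendsto : Filter.Tendsto G (𝓝 0) (𝓝 0) :=
    hG0 ▸ (hG.differentiableAt (ball_mem_nhds 0 one_pos)).continuousAt.tendsto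
  set L := fderiv ℂ G 0
  have hLtendsto : Filter.Tendsto L (𝓝 0) (𝓝 0) := by simpa using L.continuous.tendsto 0
  refine ⟨L, norm_fderiv_le_one_of_mapsTo_ball hG (by rwa [hG0]) one_pos, ?_⟩
  refine IsBigO.congr' (((isBigO_mobius_sub_mobius (-F 0) hGtendsto hLtendsto).trans
    (isBigO_sq_sub_fderiv hG hG1 hG0))) ?_ Filter.EventuallyEq.rfl
  filter_upwards [ball_mem_nhds (0 : E) one_pos] with x hx
  rw [mobius_neg_mobius hp (hlt x hx).le]

lemma conj_eq_inv_of_mem_sphere {z : ℂ} (hz : z ∈ sphere (0 : ℂ) 1) : conj z = z⁻¹ :=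
  (inv_eq_conj (mem_sphere_zero_iff_norm.1 hz)).symm

section Blaschke

variable {ι : Type*} [Fintype ι] {ω z : ℂ} {a : ι → ℂ}

/-- The common denominator of the Möbius factors of a Blaschke product with zeros `a`. -/
def blaschkeDenom (a : ι → ℂ) (z : ℂ) : ℂ := ∏ i, (1 - conj (a i) * z)

/-- The Blaschke product with zeros `a` and unimodular constant `ω`, with the sign convention of
`IsBlaschke`. -/
def blaschke (ω : ℂ) (a : ι → ℂ) (z : ℂ) : ℂ := ω * ∏ i, (a i - z) / (1 - conj (a i) * z)

lemma blaschkeDenom_ne_zero (ha : ∀ i, ‖a i‖ < 1) (hz : ‖z‖ ≤ 1) : blaschkeDenom a z ≠ 0 :=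
  Finset.prod_ne_zero_iff.2 fun i _ ↦ one_sub_conj_mul_ne_zero_s10 (ha i) hz

lemma differentiable_blaschkeDenom (a : ι → ℂ) : Differentiable ℂ (blaschkeDenom a) := by
  unfold blaschkeDenom
  fun_prop

lemma prod_sub_eq_pow_mul_conj_blaschkeDenom (a : ι → ℂ) (hz : z ∈ sphere (0 : ℂ) 1) :
    ∏ i, (z - a i) = z ^ Fintype.card ι * conj (blaschkeDenom a z) := by
  have hz0 : z ≠ 0 := ne_zero_of_mem_unit_sphere ⟨z, hz⟩
  have hfac : ∀ i, z - a i = z * conj (1 - conj (a i) * z) := fun i ↦ by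
    rw [map_sub, map_mul, map_one, conj_conj, conj_eq_inv_of_mem_sphere hz, mul_sub, mul_one,
      mul_comm (a i), mul_inv_cancel_left₀ hz0]
  rw [blaschkeDenom, map_prod, Fintype.prod_congr _ _ hfac, Finset.prod_mul_distrib,
    Finset.prod_const, Finset.card_univ]

lemma blaschke_eq_div (ω : ℂ) (a : ι → ℂ) (z : ℂ) :
    blaschke ω a z = ω * (-1) ^ Fintype.card ι * (∏ i, (z - a i)) / blaschkeDenom a z := by
  have hneg : ∏ i, (a i - z) = (-1) ^ Fintype.card ι * ∏ i, (z - a i) := by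
    simp_rw [← neg_sub z, Finset.prod_neg, Finset.card_univ]
  rw [blaschke, blaschkeDenom, Finset.prod_div_distrib, hneg]
  ring

lemma differentiableOn_blaschke (ω : ℂ) (ha : ∀ i, ‖a i‖ < 1) :
    DifferentiableOn ℂ (blaschke ω a) (closedBall 0 1) := by
  simp_rw [funext (blaschke_eq_div ω a)]
  exact DifferentiableOn.div (by fun_prop) (differentiable_blaschkeDenom a).differentiableOn
    fun z hz ↦ blaschkeDenom_ne_zero ha (mem_closedBall_zero_iff.1 hz)

lemma norm_blaschke_eq_one (hω : ‖ω‖ = 1) (ha : ∀ i, ‖a i‖ < 1) (hz : z ∈ sphere (0 : ℂ) 1) :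
    ‖blaschke ω a z‖ = 1 := by
  have hz' : ‖z‖ = 1 := mem_sphere_zero_iff_norm.1 hz
  have hden := norm_ne_zero_iff.2 (blaschkeDenom_ne_zero ha hz'.le)
  rw [blaschke_eq_div, prod_sub_eq_pow_mul_conj_blaschkeDenom a hz]
  simp [hω, hz', hden]

lemma conj_mul_sq_mul_blaschke_sub_div_pow (hω : ‖ω‖ = 1) (ha : ∀ i, ‖a i‖ < 1)
    (hz : z ∈ sphere (0 : ℂ) 1) (x : ℂ) :
    conj (ω * (-1) ^ Fintype.card ι) * blaschkeDenom a z ^ 2 * (blaschke ω a z - x) /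
        z ^ Fintype.card ι =
      normSq (blaschkeDenom a z) * (1 - conj (blaschke ω a z) * x) := by
  have hz' : ‖z‖ = 1 := mem_sphere_zero_iff_norm.1 hz
  have hden := blaschkeDenom_ne_zero ha hz'.le
  have hdenc : conj (blaschkeDenom a z) ≠ 0 := (map_ne_zero _).2 hden
  have hB : conj (blaschke ω a z) * blaschke ω a z = 1 := by
    rw [conj_mul', norm_blaschke_eq_one hω ha hz, ofReal_one, one_pow]
  have hconj : conj (blaschke ω a z) * conj (blaschkeDenom a z) =
      conj (ω * (-1) ^ Fintype.card ι) * blaschkeDenom a z / z ^ Fintype.card ι := by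
    rw [blaschke_eq_div, prod_sub_eq_pow_mul_conj_blaschkeDenom a hz]
    simp only [map_div₀, map_mul, map_pow, conj_conj, conj_eq_inv_of_mem_sphere hz, inv_pow]
    field_simp
  calc _ = conj (ω * (-1) ^ Fintype.card ι) * blaschkeDenom a z / z ^ Fintype.card ι *
        blaschkeDenom a z * (blaschke ω a z - x) := by ring
    _ = blaschkeDenom a z * conj (blaschkeDenom a z) *
        (conj (blaschke ω a z) * blaschke ω a z - conj (blaschke ω a z) * x) := by
      rw [← hconj]; ring
    _ = _ := by rw [mul_conj, hB]

lemma eqOn_sphere_blaschke_of_isBigO (hω : ‖ω‖ = 1) (ha : ∀ i, ‖a i‖ < 1) {h : ℂ → ℂ}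
    (hh : DifferentiableOn ℂ h (closedBall 0 1)) (hle : ∀ z ∈ sphere (0 : ℂ) 1, ‖h z‖ ≤ 1)
    (hO : (fun z ↦ blaschke ω a z - h z) =O[𝓝 0] fun z ↦ z ^ (Fintype.card ι + 1)) :
    EqOn h (blaschke ω a) (sphere 0 1) := by
  set D := blaschkeDenom a
  set Ψ : ℂ → ℂ := fun z ↦
    conj (ω * (-1) ^ Fintype.card ι) * D z ^ 2 * (blaschke ω a z - h z)
  have hD : Differentiable ℂ fun z ↦ conj (ω * (-1) ^ Fintype.card ι) * D z ^ 2 :=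
    ((differentiable_blaschkeDenom a).pow 2).const_mul _
  have hΨ : DifferentiableOn ℂ Ψ (closedBall 0 1) :=
    hD.differentiableOn.mul ((differentiableOn_blaschke ω ha).sub hh)
  have hΨO : Ψ =O[𝓝 0] fun z ↦ z ^ (Fintype.card ι + 1) := by
    simpa only [one_mul] using (hD.continuous.continuousAt.isBigO_one ℂ).mul hO
  have hΦ : DifferentiableOn ℂ (fun z ↦ Ψ z / z ^ Fintype.card ι) (closedBall 0 1) :=
    differentiableOn_div_pow_of_isBigO (closedBall_mem_nhds 0 one_pos) hΨ hΨO
  have hΦ0 : Ψ 0 / 0 ^ Fintype.card ι = 0 := (div_pow_isBigO_id hΨO).eq_zero_imp.self_of_nhds rfl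
  have hre : ∀ z ∈ sphere (0 : ℂ) 1, (Ψ z / z ^ Fintype.card ι).re =
      normSq (D z) * (1 - (conj (blaschke ω a z) * h z).re) := fun z hz ↦ by
    rw [conj_mul_sq_mul_blaschke_sub_div_pow hω ha hz, re_ofReal_mul, sub_re, one_re]
  have hnorm : ∀ z ∈ sphere (0 : ℂ) 1, ‖conj (blaschke ω a z) * h z‖ ≤ 1 := fun z hz ↦ by
    simpa [norm_blaschke_eq_one hω ha hz] using hle z hz
  have hzero := re_eq_zero_on_sphere_of_re_nonneg one_ne_zero
    (hΦ.diffContOnCl_ball subset_rfl) hΦ0 fun z hz ↦ by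
      rw [hre z hz]
      exact mul_nonneg (normSq_nonneg _) (sub_nonneg.2 ((re_le_norm _).trans (hnorm z hz)))
  intro z hz
  have hDz : normSq (D z) ≠ 0 :=
    normSq_eq_zero.not.2 (blaschkeDenom_ne_zero ha (mem_sphere_zero_iff_norm.1 hz).le)
  have hre1 : (conj (blaschke ω a z) * h z).re = 1 :=
    (sub_eq_zero.1 ((mul_eq_zero.1 ((hre z hz).symm.trans (hzero z hz))).resolve_left hDz)).symm
  have hone := eq_one_of_norm_le_one_of_re_eq_one (hnorm z hz) hre1
  rw [← inv_eq_conj (norm_blaschke_eq_one hω ha hz)] at hone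
  exact (eq_of_inv_mul_eq_one hone).symm

lemma exists_mem_sphere_re_conj_pow_mul_nonpos {n : ℕ} {lam : Fin (n + 1) → ℂ}
    (hinj : Function.Injective lam) (hlam : ∀ j, ‖lam j‖ < 1) {ψ : ℂ → ℂ}
    (hψ : DifferentiableOn ℂ ψ (closedBall 0 1)) (hzero : ∀ j, ψ (lam j) = 0) :
    ∃ z ∈ sphere (0 : ℂ) 1, (conj z ^ n * ψ z).re ≤ 0 := by
  by_contra! hpos
  set D := blaschkeDenom lam
  have hnhds : ∀ j, closedBall (0 : ℂ) 1 ∈ 𝓝 (lam j) := fun j ↦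
    closedBall_mem_nhds_of_mem (mem_ball_zero_iff.2 (hlam j))
  obtain ⟨r, hr, hψr⟩ := exists_eq_prod_sub_mul_of_eq_zero (S := Finset.univ) hinj.injOn hψ
    (fun j _ ↦ hnhds j) fun j _ ↦ hzero j
  have hΦ : DifferentiableOn ℂ (fun z ↦ z * r z / D z) (closedBall 0 1) :=
    (differentiableOn_id.mul hr).div (differentiable_blaschkeDenom lam).differentiableOn
      fun z hz ↦ blaschkeDenom_ne_zero hlam (mem_closedBall_zero_iff.1 hz)
  have hre : ∀ z ∈ sphere (0 : ℂ) 1,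
      (conj z ^ n * ψ z).re = normSq (D z) * (z * r z / D z).re := fun z hz ↦ by
    have hz0 : z ≠ 0 := ne_zero_of_mem_unit_sphere ⟨z, hz⟩
    have hDz : D z ≠ 0 := blaschkeDenom_ne_zero hlam (mem_sphere_zero_iff_norm.1 hz).le
    rw [← re_ofReal_mul, hψr, prod_sub_eq_pow_mul_conj_blaschkeDenom lam hz, Fintype.card_fin,
      conj_eq_inv_of_mem_sphere hz, inv_pow, normSq_eq_conj_mul_self]
    congr 1
    field_simp
    ring
  have hpos' : ∀ z ∈ sphere (0 : ℂ) 1, 0 < (z * r z / D z).re := fun z hz ↦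
    pos_of_mul_pos_right ((hpos z hz).trans_eq (hre z hz)) (normSq_nonneg _)
  have h1 : (1 : ℂ) ∈ sphere (0 : ℂ) 1 := by simp
  exact (hpos' 1 h1).ne' (re_eq_zero_on_sphere_of_re_nonneg one_ne_zero
    (hΦ.diffContOnCl_ball subset_rfl) (by simp) (fun z hz ↦ (hpos' z hz).le) 1 h1)

end Blaschke

lemma norm_eq_one_or_norm_eq_one_of_norm_add_mul {a b : ℂ}
    (h : ∀ z ∈ sphere (0 : ℂ) 1, ‖a + z * b‖ = 1) : ‖a‖ = 1 ∨ ‖b‖ = 1 := by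
  have hsq : ∀ z ∈ sphere (0 : ℂ) 1, normSq (a + z * b) = 1 := fun z hz ↦ by
    rw [normSq_eq_norm_sq, h z hz, one_pow]
  have h1 := hsq 1 (by simp)
  have h2 := hsq (-1) (by simp)
  have h3 := hsq I (by simp)
  have h4 := hsq (-I) (by simp)
  simp only [normSq_apply, add_re, add_im, mul_re, mul_im, neg_re, neg_im, one_re, one_im,
    I_re, I_im] at h1 h2 h3 h4
  have hab : conj a * b = 0 := by
    apply Complex.ext <;> simp only [mul_re, mul_im, conj_re, conj_im, zero_re, zero_im] <;>
      linarith
  have hsum := h 1 (by simp)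
  rcases mul_eq_zero.1 hab with ha | hb
  · rw [(map_eq_zero _).1 ha, zero_add, one_mul] at hsum
    exact Or.inr hsum
  · rw [hb, mul_zero, add_zero] at hsum
    exact Or.inl hsum

lemma norm_le_one_of_mapsTo_ball {F : Type*} [SeminormedAddCommGroup F] {f : ℂ → F}
    (hf : Continuous f) (hmaps : MapsTo f (ball 0 1) (ball 0 1)) {z : ℂ}
    (hz : ‖z‖ ≤ 1) : ‖f z‖ ≤ 1 := by
  have hmem := hmaps.closure hf (closure_ball (0 : ℂ) one_ne_zero ▸ mem_closedBall_zero_iff.2 hz)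
  exact mem_closedBall_zero_iff.1 (closure_ball_subset_closedBall hmem)

section PowDisc

/-- The disc `z ↦ z ^ k • (v + z • w)`, the coordinate-free form of `f10`. -/
def powDisc (k : ℕ) (v w : E) (z : ℂ) : E := z ^ k • (v + z • w)

variable {k m : ℕ} {v w : E}

lemma differentiable_powDisc (k : ℕ) (v w : E) : Differentiable ℂ (powDisc k v w) := by
  unfold powDisc
  fun_prop

lemma powDisc_isBigO_pow (k : ℕ) (v w : E) : powDisc k v w =O[𝓝 0] fun z ↦ z ^ k := by
  have hone : (fun z : ℂ ↦ v + z • w) =O[𝓝 0] fun _ ↦ (1 : ℂ) :=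
    (by fun_prop : Continuous fun z : ℂ ↦ v + z • w).continuousAt.isBigO_one ℂ
  exact ((isBigO_refl (fun z : ℂ ↦ z ^ k) (𝓝 0)).smul hone).congr_right fun z ↦ mul_one (z ^ k)

lemma tendsto_powDisc (hk : k ≠ 0) (v w : E) : Filter.Tendsto (powDisc k v w) (𝓝 0) (𝓝 0) := by
  simpa [powDisc, hk] using (differentiable_powDisc k v w).continuous.tendsto 0

lemma norm_apply_powDisc_of_mem_sphere {F : Type*} [NormedAddCommGroup F] [NormedSpace ℂ F]
    (L : E →L[ℂ] F) {z : ℂ} (hz : z ∈ sphere (0 : ℂ) 1) :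
    ‖L (powDisc k v w z)‖ = ‖L v + z • L w‖ := by
  rw [powDisc, map_smul, map_add, map_smul, norm_smul, norm_pow, mem_sphere_zero_iff_norm.1 hz,
    one_pow, one_mul]

lemma exists_clm_comp_powDisc_sub_mobius_isBigO (hk : k ≠ 0) {F : E → ℂ}
    (hF : DifferentiableOn ℂ F (ball 0 1)) (hmaps : MapsTo F (ball 0 1) (ball 0 1)) :
    ∃ L : E →L[ℂ] ℂ, ‖L‖ ≤ 1 ∧
      (fun z ↦ F (powDisc k v w z) - mobius (-F 0) (L (powDisc k v w z))) =O[𝓝 0]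
        fun z ↦ z ^ (2 * k) := by
  obtain ⟨L, hL, hO⟩ := exists_clm_isBigO_sub_mobius hF hmaps
  refine ⟨L, hL, (hO.comp_tendsto (tendsto_powDisc hk v w)).trans ?_⟩
  exact ((powDisc_isBigO_pow k v w).norm_left.pow 2).congr_right fun z ↦ by
    rw [← pow_mul, mul_comm k 2]

theorem not_isComplexGeodesicOfOrder_powDisc (hv : ‖v‖ < 1) (hw : ‖w‖ < 1) (hm : m ≤ 2 * k) :
    ¬ IsComplexGeodesicOfOrder (ball 0 1) m (powDisc k v w) := by
  rintro ⟨-, hball, F, hF, hFmaps, n, hn, hnm, B, ⟨ω, a, hω, ha, hB⟩, hFB⟩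
  have ha' : ∀ j, ‖a j‖ < 1 := fun j ↦ mem_ball_zero_iff.1 (ha j)
  have hp : ‖-F 0‖ < 1 := by
    simpa using mem_ball_zero_iff.1 (hFmaps 0 (mem_ball_self one_pos))
  obtain ⟨L, hL, hO⟩ := exists_clm_comp_powDisc_sub_mobius_isBigO (k := k) (v := v) (w := w)
    (by omega) hF hFmaps
  have hLle : ∀ x : E, ‖L x‖ ≤ ‖x‖ := fun x ↦ by simpa using L.le_of_opNorm_le hL x
  set h : ℂ → ℂ := fun z ↦ mobius (-F 0) (L (powDisc k v w z))
  have hLf : ∀ z : ℂ, ‖z‖ ≤ 1 → ‖L (powDisc k v w z)‖ ≤ 1 := fun z hz ↦ (hLle _).trans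
    (norm_le_one_of_mapsTo_ball (differentiable_powDisc k v w).continuous hball hz)
  have hh : DifferentiableOn ℂ h (closedBall 0 1) := fun z hz ↦
    (DifferentiableAt.comp z (differentiableAt_mobius hp (hLf z (mem_closedBall_zero_iff.1 hz)))
      (L.differentiable.comp (differentiable_powDisc k v w) z)).differentiableWithinAt
  have hBO : (fun z ↦ blaschke ω a z - h z) =O[𝓝 0] fun z ↦ z ^ (Fintype.card (Fin n) + 1) := by
    refine (hO.congr' ?_ Filter.EventuallyEq.rfl).trans
      (pow_isBigO_pow_of_le (by rw [Fintype.card_fin]; omega))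
    filter_upwards [ball_mem_nhds (0 : ℂ) one_pos] with z hz
    rw [hFB z hz, hB z hz, blaschke]
  have heq : EqOn h (blaschke ω a) (sphere 0 1) :=
    eqOn_sphere_blaschke_of_isBigO hω ha' hh (fun z hz ↦
      norm_mobius_le_one hp (hLf z (mem_sphere_zero_iff_norm.1 hz).le)) hBO
  have hnorm : ∀ z ∈ sphere (0 : ℂ) 1, ‖L v + z * L w‖ = 1 := fun z hz ↦ by
    rw [← smul_eq_mul, ← norm_apply_powDisc_of_mem_sphere (k := k) L hz]
    refine norm_eq_one_of_norm_mobius_eq_one hp (hLf z (mem_sphere_zero_iff_norm.1 hz).le) ?_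
    rw [← norm_blaschke_eq_one hω ha' hz, ← heq hz]
  rcases norm_eq_one_or_norm_eq_one_of_norm_add_mul hnorm with h1 | h1
  · exact (h1.symm.trans_le (hLle v)).not_gt hv
  · exact (h1.symm.trans_le (hLle w)).not_gt hw

end PowDisc

section InnerProductSpace

variable {H : Type*} [NormedAddCommGroup H] [InnerProductSpace ℂ H] {k : ℕ} {v w : H} {z : ℂ}

lemma norm_powDisc_sq (k : ℕ) (hvw : ⟪v, w⟫_ℂ = 0) (z : ℂ) :
    ‖powDisc k v w z‖ ^ 2 = (‖z‖ ^ k) ^ 2 * (‖v‖ ^ 2 + ‖z‖ ^ 2 * ‖w‖ ^ 2) := by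
  have horth : ⟪v, z • w⟫_ℂ = 0 := by rw [inner_smul_right, hvw, mul_zero]
  rw [powDisc, norm_smul, norm_pow, mul_pow, ← mul_pow ‖z‖ ‖w‖, ← norm_smul]
  congr 1
  simpa only [sq] using norm_add_sq_eq_norm_sq_add_norm_sq_of_inner_eq_zero v (z • w) horth

lemma norm_powDisc_lt_one (k : ℕ) (hvw : ⟪v, w⟫_ℂ = 0) (hnorm : ‖v‖ ^ 2 + ‖w‖ ^ 2 = 1)
    (hw : w ≠ 0) (hz : ‖z‖ < 1) : ‖powDisc k v w z‖ < 1 := by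
  have hw2 : 0 < ‖w‖ ^ 2 := by positivity
  have hz2 : ‖z‖ ^ 2 < 1 := pow_lt_one₀ (norm_nonneg z) hz two_ne_zero
  have hzk : (‖z‖ ^ k) ^ 2 ≤ 1 :=
    pow_le_one₀ (by positivity) (pow_le_one₀ (norm_nonneg z) hz.le)
  rw [← sq_lt_one_iff₀ (norm_nonneg _), norm_powDisc_sq k hvw]
  calc (‖z‖ ^ k) ^ 2 * (‖v‖ ^ 2 + ‖z‖ ^ 2 * ‖w‖ ^ 2)
      ≤ ‖v‖ ^ 2 + ‖z‖ ^ 2 * ‖w‖ ^ 2 := mul_le_of_le_one_left (by positivity) hzk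
    _ < ‖v‖ ^ 2 + ‖w‖ ^ 2 := by gcongr; exact mul_lt_of_lt_one_left hw2 hz2
    _ = 1 := hnorm

lemma norm_powDisc_eq_one (k : ℕ) (hvw : ⟪v, w⟫_ℂ = 0) (hnorm : ‖v‖ ^ 2 + ‖w‖ ^ 2 = 1)
    (hz : z ∈ sphere (0 : ℂ) 1) : ‖powDisc k v w z‖ = 1 := by
  rw [← pow_eq_one_iff_of_nonneg (norm_nonneg _) two_ne_zero, norm_powDisc_sq k hvw,
    mem_sphere_zero_iff_norm.1 hz, one_pow, one_pow, one_mul, one_mul, hnorm]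

lemma inner_powDisc_of_mem_sphere (hz : z ∈ sphere (0 : ℂ) 1) (x : H) :
    ⟪powDisc k v w z, x⟫_ℂ = conj z ^ (k + 1) * (z * ⟪v, x⟫_ℂ + ⟪w, x⟫_ℂ) := by
  have hz1 : conj z * z = 1 := by
    rw [conj_mul', mem_sphere_zero_iff_norm.1 hz, ofReal_one, one_pow]
  rw [powDisc, inner_smul_left, inner_add_left, inner_smul_left, map_pow, pow_succ]
  linear_combination -(conj z ^ k * ⟪v, x⟫_ℂ) * hz1

theorem isMExtremal_powDisc (k : ℕ) (hvw : ⟪v, w⟫_ℂ = 0) (hnorm : ‖v‖ ^ 2 + ‖w‖ ^ 2 = 1)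
    (hw : w ≠ 0) : IsMExtremal (ball 0 1) (k + 2) (powDisc k v w) := by
  refine ⟨(differentiable_powDisc k v w).differentiableOn, fun z hz ↦ mem_ball_zero_iff.2
    (norm_powDisc_lt_one k hvw hnorm hw (mem_ball_zero_iff.1 hz)), ?_⟩
  rintro lam hinj hlam ⟨U, g, -, hU, hg, hgball, hinterp⟩
  set d : ℂ → H := fun z ↦ powDisc k v w z - g z
  have hd : DifferentiableOn ℂ d (closedBall 0 1) :=
    (differentiable_powDisc k v w).differentiableOn.sub (hg.mono hU)
  have hinner : ∀ u : H, DifferentiableOn ℂ (fun z ↦ ⟪u, d z⟫_ℂ) (closedBall 0 1) := fun u ↦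
    (innerSL ℂ u).differentiable.comp_differentiableOn hd
  obtain ⟨z, hz, hle⟩ := exists_mem_sphere_re_conj_pow_mul_nonpos hinj
    (fun j ↦ mem_ball_zero_iff.1 (hlam j)) ((differentiableOn_id.mul (hinner v)).add (hinner w))
    fun j ↦ by simp [d, hinterp]
  have hf1 : ‖powDisc k v w z‖ = 1 := norm_powDisc_eq_one k hvw hnorm hz
  have hg1 : ‖g z‖ < 1 := mem_ball_zero_iff.1 (hgball z (hU (sphere_subset_closedBall hz)))
  have hfg : (⟪powDisc k v w z, g z⟫_ℂ).re < 1 := calc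
    _ ≤ ‖powDisc k v w z‖ * ‖g z‖ := re_inner_le_norm (𝕜 := ℂ) _ _
    _ < 1 := by rwa [hf1, one_mul]
  have hre : (⟪powDisc k v w z, d z⟫_ℂ).re = 1 - (⟪powDisc k v w z, g z⟫_ℂ).re := by
    rw [inner_sub_right, sub_re, inner_self_eq_norm_sq_to_K, hf1]
    simp
  have hle' : (⟪powDisc k v w z, d z⟫_ℂ).re ≤ 0 := inner_powDisc_of_mem_sphere hz (d z) ▸ hle
  linarith

end InnerProductSpace

lemma exists_orthogonal_f10_eq_powDisc (k : ℕ) {a₁ : ℝ} (ha : a₁ ∈ Ioo (0 : ℝ) 1) :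
    ∃ v w : EuclideanSpace ℂ (Fin 2), ⟪v, w⟫_ℂ = 0 ∧ ‖v‖ ^ 2 + ‖w‖ ^ 2 = 1 ∧ v ≠ 0 ∧ w ≠ 0 ∧
      f10 k a₁ = powDisc k v w := by
  have hpos : 0 < 1 - a₁ ^ 2 := sub_pos.2 (pow_lt_one₀ ha.1.le ha.2 two_ne_zero)
  refine ⟨EuclideanSpace.single 0 (a₁ : ℂ), EuclideanSpace.single 1 (√(1 - a₁ ^ 2) : ℂ),
    by simp [EuclideanSpace.inner_single_left], ?_, by simpa using ha.1.ne',
    by simpa using (Real.sqrt_pos.2 hpos).ne', ?_⟩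
  · simp only [PiLp.norm_single, norm_real, Real.norm_eq_abs, sq_abs, Real.sq_sqrt hpos.le,
      add_sub_cancel]
  · ext z i
    fin_cases i <;> simp [f10, powDisc] <;> ring

theorem stmt10_general {H : Type*} [NormedAddCommGroup H] [InnerProductSpace ℂ H] (k : ℕ)
    {v w : H} (hvw : ⟪v, w⟫_ℂ = 0) (hnorm : ‖v‖ ^ 2 + ‖w‖ ^ 2 = 1) (hv : v ≠ 0) (hw : w ≠ 0) :
    IsMExtremal (ball 0 1) (k + 2) (powDisc k v w) ∧
      ∀ m ≤ 2 * k, ¬ IsComplexGeodesicOfOrder (ball 0 1) m (powDisc k v w) := by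
  have hv2 : 0 < ‖v‖ ^ 2 := by positivity
  have hw2 : 0 < ‖w‖ ^ 2 := by positivity
  have hv1 : ‖v‖ < 1 := (sq_lt_one_iff₀ (norm_nonneg v)).1 (by linarith)
  have hw1 : ‖w‖ < 1 := (sq_lt_one_iff₀ (norm_nonneg w)).1 (by linarith)
  exact ⟨isMExtremal_powDisc k hvw hnorm hw,
    fun m hm ↦ not_isComplexGeodesicOfOrder_powDisc hv1 hw1 hm⟩

theorem stmt10 (k : ℕ) (hk : 3 ≤ k) (a₁ : ℝ) (ha : a₁ ∈ Set.Ioo (0 : ℝ) 1) :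
    (¬ ∃ F : EuclideanSpace ℂ (Fin 2) → ℂ,
        DifferentiableOn ℂ F (Metric.ball 0 1) ∧
        (∀ z ∈ Metric.ball (0 : EuclideanSpace ℂ (Fin 2)) 1, F z ∈ 𝔻) ∧ F 0 = 0 ∧
        ∃ j : ℕ, 1 ≤ j ∧ j ≤ k + 1 ∧ ∃ B : ℂ → ℂ, IsBlaschke j B ∧
          ∀ z ∈ 𝔻, F (f10 k a₁ z) = B z) ∧
    IsMExtremal (Metric.ball (0 : EuclideanSpace ℂ (Fin 2)) 1) (k + 2) (f10 k a₁) ∧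
    ¬ IsComplexGeodesicOfOrder (Metric.ball (0 : EuclideanSpace ℂ (Fin 2)) 1) (k + 2)
        (f10 k a₁) := by
  obtain ⟨v, w, hvw, hnorm, hv, hw, hf⟩ := exists_orthogonal_f10_eq_powDisc k ha
  obtain ⟨hext, hgeo⟩ := hf ▸ stmt10_general k hvw hnorm hv hw
  have hnot := hgeo (k + 2) (by omega)
  exact ⟨fun ⟨F, hF, hmaps, _, hB⟩ ↦ hnot ⟨hext.1, hext.2.1, F, hF, hmaps, hB⟩, hext, hnot⟩

end
end

section
/- Let f : 𝔻 → ℛ_{II} be a complex geodesic of the Cartan domain ℛ_{II} of symmetric 2×2 matrices with f(0) = 0. Then there exist a unitary 2×2 matrix U and a holomorphic function Z : 𝔻 → 𝔻 with Z(0) = 0 such that f(λ) = U·diag(λ, Z(λ))·Uᵗ for all λ ∈ 𝔻. -/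
open Complex Metric Set

noncomputable section

variable {E : Type*} [NormedAddCommGroup E] [NormedSpace ℂ E]

attribute [local instance] Matrix.normedAddCommGroup Matrix.normedSpace

/-- The Cartan domain of the second type: symmetric `2 × 2` complex matrices of
operator norm less than `1`. -/
def RII : Set (Matrix (Fin 2) (Fin 2) ℂ) :=
  {z | z.IsSymm ∧ ‖Matrix.toEuclideanCLM (𝕜 := ℂ) z‖ < 1}

/-- The map `π : z ↦ (z₁₁, z₂₂, det z)`. -/
def tetraPi (z : Matrix (Fin 2) (Fin 2) ℂ) : Fin 3 → ℂ := ![z 0 0, z 1 1, z.det]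

/-- The tetrablock. -/
def TetE : Set (Fin 3 → ℂ) :=
  {x | ‖x 0 - (starRingEnd ℂ) (x 1) * x 2‖ + ‖x 1 - (starRingEnd ℂ) (x 0) * x 2‖ + ‖x 2‖ ^ 2 < 1}

/-- The royal variety of the tetrablock. -/
def RoyalT : Set (Fin 3 → ℂ) := {x | x 0 ∈ 𝔻 ∧ x 1 ∈ 𝔻 ∧ x 2 ∈ 𝔻 ∧ x 0 * x 1 = x 2}

/-!
By the Schwarz lemma for `f` and for its left inverse, `‖f z₀‖ = ‖z₀‖` at a chosen `z₀ ≠ 0`. As in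
Takagi's factorization, a symmetric matrix `A` has, for each `ω` of modulus `‖A‖`, a unit vector `x`
with `A x̄ = ω x`; take `A = f z₀` and `ω = z₀`. The vector-valued function `z ↦ f z x̄` has norm at
most `1` and attains equality in the Schwarz lemma at `z₀`, so strict convexity of the Euclidean
norm forces `f z x̄ = z x` on the whole disc. If `x` is a column of a unitary matrix `U`, the
corresponding column of `U* f Ū` is `z` times a basis vector, and by symmetry so is the row.
-/

open Matrix

section SchwarzLemma

lemma norm_apply_smul_le_of_balanced {D : Set E} (hD : Balanced ℂ D) {F : E → ℂ}
    (hF : DifferentiableOn ℂ F D) (hFD : MapsTo F D (closedBall 0 1)) (hF0 : F 0 = 0)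
    {x : E} (hx : x ∈ D) {w : ℂ} (hw : ‖w‖ < 1) : ‖F (w • x)‖ ≤ ‖w‖ := by
  have hline : MapsTo (fun w : ℂ ↦ w • x) (ball 0 1) D := fun w hw ↦
    hD.smul_mem (mem_ball_zero_iff.mp hw).le hx
  exact norm_le_norm_of_mapsTo_ball (f := fun w ↦ F (w • x))
    (hF.comp (by fun_prop) hline) (hFD.comp hline) (by simpa using hF0) hw

lemma eqOn_smul_of_mapsTo_ball [StrictConvexSpace ℝ E] {h : ℂ → E}
    (hd : DifferentiableOn ℂ h (ball 0 1)) (hmaps : MapsTo h (ball 0 1) (closedBall 0 1))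
    (h0 : h 0 = 0) {z₀ : ℂ} (hz₀ : z₀ ∈ ball 0 1) (hz₀_ne : z₀ ≠ 0) {x : E} (hx : ‖x‖ = 1)
    (hhz₀ : h z₀ = z₀ • x) : EqOn h (fun z ↦ z • x) (ball 0 1) := by
  have hslope : dslope h 0 z₀ = x := by
    rw [dslope_of_ne _ hz₀_ne, slope_def_module, hhz₀, h0]
    simp [smul_smul, hz₀_ne]
  intro z hz
  simpa [hslope, h0] using affine_of_mapsTo_ball_of_norm_dslope_eq_div hd
    (by simpa [h0] using hmaps) hz₀ (by simp [hslope, hx]) hz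

end SchwarzLemma

section StarRing

variable {R n : Type*} [CommRing R] [StarRing R] [Fintype n]

lemma mulVec_star_of_isSymm {A : Matrix n n R} (hA : A.IsSymm) (v : n → R) :
    A *ᵥ star v = star (Aᴴ *ᵥ v) := by
  rw [star_mulVec, conjTranspose_conjTranspose, ← mulVec_transpose, hA.eq]

variable [DecidableEq n]

lemma col_star_mul_mul_transpose_eq_single {U A : Matrix n n R} (hU : U ∈ unitaryGroup n R)
    {i : n} {z : R} (hA : A *ᵥ star (U.col i) = z • U.col i) :
    (star U * A * (star U)ᵀ).col i = Pi.single i z := by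
  have hcol : (star U)ᵀ.col i = star (U.col i) := rfl
  calc (star U * A * (star U)ᵀ).col i = star U *ᵥ A *ᵥ (star U)ᵀ.col i := by
        simp only [← mulVec_single_one, mulVec_mulVec, Matrix.mul_assoc]
    _ = z • (star U * U).col i := by
        rw [hcol, hA, mulVec_smul, ← mulVec_single_one, mulVec_mulVec, mulVec_single_one]
    _ = Pi.single i z := by
        rw [mem_unitaryGroup_iff'.mp hU, ← mulVec_single_one, one_mulVec, ← Pi.single_smul,
          smul_eq_mul, mul_one]

lemma mul_star_mul_mul_transpose_mul_transpose {U : Matrix n n R} (hU : U ∈ unitaryGroup n R)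
    (A : Matrix n n R) : U * (star U * A * (star U)ᵀ) * Uᵀ = A :=
  calc U * (star U * A * (star U)ᵀ) * Uᵀ = (U * star U) * A * (U * star U)ᵀ := by
        simp only [transpose_mul, Matrix.mul_assoc]
    _ = A := by rw [mem_unitaryGroup_iff.mp hU, transpose_one, Matrix.one_mul, Matrix.mul_one]

end StarRing

lemma eq_diag_fin_two_of_isSymm_of_col {R : Type*} [Zero R] {A : Matrix (Fin 2) (Fin 2) R}
    (hA : A.IsSymm) {z : R} (hcol : A.col 0 = Pi.single 0 z) : A = !![z, 0; 0, A 1 1] := by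
  have h00 : A 0 0 = z := by simpa using congrFun hcol 0
  have h10 : A 1 0 = 0 := by simpa using congrFun hcol 1
  have h01 : A 0 1 = 0 := (hA.apply 1 0).trans h10
  nth_rw 1 [eta_fin_two A, h00, h01, h10]

lemma differentiable_mul_mul {𝕜 l m n o : Type*} [RCLike 𝕜] [Finite l] [Fintype m] [Fintype n]
    [Finite o] (B : Matrix l m 𝕜) (C : Matrix n o 𝕜) :
    Differentiable 𝕜 fun A : Matrix m n 𝕜 ↦ B * A * C :=
  (mulRightLinearMap l 𝕜 C ∘ₗ mulLeftLinearMap n 𝕜 B).toContinuousLinearMap.differentiable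

section OperatorNorm

variable {𝕜 n : Type*} [RCLike 𝕜] [Fintype n] [DecidableEq n]

lemma norm_entry_le_norm_toEuclideanCLM (A : Matrix n n 𝕜) (i j : n) :
    ‖A i j‖ ≤ ‖toEuclideanCLM (𝕜 := 𝕜) A‖ :=
  calc ‖A i j‖ = ‖toEuclideanCLM (𝕜 := 𝕜) A (EuclideanSpace.single j 1) i‖ := by simp
    _ ≤ ‖toEuclideanCLM (𝕜 := 𝕜) A (EuclideanSpace.single j 1)‖ := PiLp.norm_apply_le _ i
    _ ≤ ‖toEuclideanCLM (𝕜 := 𝕜) A‖ := by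
      simpa using (toEuclideanCLM (𝕜 := 𝕜) A).le_opNorm (EuclideanSpace.single j 1)

lemma norm_toEuclideanCLM_unitary_mul_mul {U V : Matrix n n 𝕜} (hU : U ∈ unitaryGroup n 𝕜)
    (hV : V ∈ unitaryGroup n 𝕜) (A : Matrix n n 𝕜) :
    ‖toEuclideanCLM (𝕜 := 𝕜) (U * A * V)‖ = ‖toEuclideanCLM (𝕜 := 𝕜) A‖ := by
  rw [map_mul, map_mul, CStarRing.norm_mul_mem_unitary _ (Unitary.map_mem _ hV),
    CStarRing.norm_mem_unitary_mul _ (Unitary.map_mem _ hU)]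

lemma differentiable_toEuclideanCLM : Differentiable 𝕜 (toEuclideanCLM (n := n) (𝕜 := 𝕜)) :=
  (toEuclideanCLM (n := n) (𝕜 := 𝕜)).toAlgEquiv.toLinearMap.toContinuousLinearMap.differentiable

lemma exists_unitary_col_eq (i : n) {x : EuclideanSpace 𝕜 n} (hx : ‖x‖ = 1) :
    ∃ U ∈ unitaryGroup n 𝕜, U.col i = x.ofLp := by
  have hortho : Orthonormal 𝕜 (({i} : Set n).domRestrict fun _ ↦ x) := by
    simp [Set.domRestrict, hx]
  obtain ⟨b, hb⟩ := hortho.exists_orthonormalBasis_extension_of_card_eq (by simp)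
  refine ⟨_, (EuclideanSpace.basisFun n 𝕜).toMatrix_orthonormalBasis_mem_unitary b, ?_⟩
  ext k
  simp [Module.Basis.toMatrix_apply, hb]

end OperatorNorm

section Coneigenvector

lemma exists_ne_zero_star_apply_apply_eq {H : Type*} [NormedAddCommGroup H]
    [InnerProductSpace ℂ H] [CompleteSpace H] [FiniteDimensional ℂ H] [Nontrivial H]
    (T : H →L[ℂ] H) : ∃ v ≠ 0, star T (T v) = (‖T‖ ^ 2 : ℂ) • v := by
  have hspec : (‖T‖ ^ 2 : ℂ) ∈ spectrum ℂ (star T * T) := by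
    have h := CStarAlgebra.norm_mem_spectrum_of_nonneg (star_mul_self_nonneg T)
    rw [CStarRing.norm_star_mul_self, ← sq] at h
    simpa using spectrum.algebraMap_mem ℂ h
  rw [ContinuousLinearMap.spectrum_eq, ← Module.End.hasEigenvalue_iff_mem_spectrum] at hspec
  obtain ⟨v, hv⟩ := hspec.exists_hasEigenvector
  exact ⟨v, hv.2, hv.apply_eq_smul⟩

lemma exists_ne_zero_apply_eq_smul_of_antilinear {V : Type*} [AddCommGroup V] [Module ℂ V]
    (K : V →ₛₗ[starRingEnd ℂ] V) {ω : ℂ} {v : V} (hv : v ≠ 0)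
    (hK : K (K v) = (‖ω‖ ^ 2 : ℂ) • v) : ∃ u ≠ 0, K u = ω • u := by
  have hω : starRingEnd ℂ ω * ω = ‖ω‖ ^ 2 := conj_mul' ω
  by_contra! hno
  -- `K - ω` annihilates the image of `K + conj ω` on the `ℂ`-span of `v`, so that image vanishes;
  -- as `K` is antilinear, `v` and `I • v` then yield independent equations.
  have hzero : ∀ w, K (K w) = (‖ω‖ ^ 2 : ℂ) • w → K w + starRingEnd ℂ ω • w = 0 := by
    intro w hw
    by_contra hne
    refine hno _ hne ?_
    rw [map_add, map_smulₛₗ, hw, conj_conj, ← hω]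
    module
  have hv₀ : K v + starRingEnd ℂ ω • v = 0 := hzero v hK
  have hIv : K (I • v) = -(I • K v) := by rw [map_smulₛₗ, conj_I, neg_smul]
  have hIv₀ : -(I • K v) + starRingEnd ℂ ω • I • v = 0 := by
    rw [← hIv]
    refine hzero _ ?_
    rw [hIv, map_neg, map_smulₛₗ, conj_I, hK]
    module
  have hKv : (2 * I) • K v = 0 := by linear_combination (norm := module) I • hv₀ - hIv₀
  replace hKv : K v = 0 := by simpa using hKv
  have hω₀ : ω = 0 := by simpa [hKv, hv] using hv₀
  exact hno v hv (by rw [hKv, hω₀, zero_smul])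

variable {n : Type*} [Fintype n] [DecidableEq n]

lemma exists_coneigenvector_of_isSymm [Nonempty n] {A : Matrix n n ℂ} (hA : A.IsSymm) {ω : ℂ}
    (hω : ‖ω‖ = ‖toEuclideanCLM (𝕜 := ℂ) A‖) :
    ∃ x : EuclideanSpace ℂ n, ‖x‖ = 1 ∧ A *ᵥ star x.ofLp = ω • x.ofLp := by
  let K : (n → ℂ) →ₛₗ[starRingEnd ℂ] (n → ℂ) :=
    A.mulVecLin.comp (starLinearEquiv ℂ : (n → ℂ) ≃ₗ⋆[ℂ] (n → ℂ)).toLinearMap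
  obtain ⟨v, hv, hAv⟩ := exists_ne_zero_star_apply_apply_eq (toEuclideanCLM (𝕜 := ℂ) A)
  rw [← map_star, star_eq_conjTranspose, ← hω] at hAv
  have hKK : K (K (star v.ofLp)) = (‖ω‖ ^ 2 : ℂ) • star v.ofLp :=
    calc A *ᵥ star (A *ᵥ star (star v.ofLp)) = star (Aᴴ *ᵥ A *ᵥ v.ofLp) := by
          rw [mulVec_star_of_isSymm hA, star_star]
      _ = star ((‖ω‖ ^ 2 : ℂ) • v.ofLp) := congrArg (fun w ↦ star w.ofLp) hAv
      _ = (‖ω‖ ^ 2 : ℂ) • star v.ofLp := by simp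
  obtain ⟨u, hu, hKu⟩ := exists_ne_zero_apply_eq_smul_of_antilinear K (by simpa using hv) hKK
  let x : EuclideanSpace ℂ n := WithLp.toLp 2 u
  refine ⟨(‖x‖⁻¹ : ℂ) • x, norm_smul_inv_norm (by simpa [x] using hu), ?_⟩
  calc K ((‖x‖⁻¹ : ℂ) • u) = (‖x‖⁻¹ : ℂ) • ω • u := by simp [map_smulₛₗ, hKu]
    _ = ω • (‖x‖⁻¹ : ℂ) • u := smul_comm _ _ _

end Coneigenvector

section CartanDomain

/-- The Cartan domain of the second type of symmetric `n × n` matrices of operator norm less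
than `1`; the domain `RII` is definitionally the case `n = Fin 2`. -/
def cartanII (n : Type*) [Fintype n] [DecidableEq n] : Set (Matrix n n ℂ) :=
  {A | A.IsSymm ∧ ‖toEuclideanCLM (𝕜 := ℂ) A‖ < 1}

variable {n : Type*} [Fintype n] [DecidableEq n] {f : ℂ → Matrix n n ℂ} {F : Matrix n n ℂ → ℂ}

lemma entry_mem_of_mem_cartanII {A : Matrix n n ℂ} (hA : A ∈ cartanII n) (i j : n) : A i j ∈ 𝔻 :=
  mem_ball_zero_iff.mpr ((norm_entry_le_norm_toEuclideanCLM A i j).trans_lt hA.2)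

lemma mul_mul_transpose_mem_cartanII {U A : Matrix n n ℂ} (hU : U ∈ unitaryGroup n ℂ)
    (hA : A ∈ cartanII n) : U * A * Uᵀ ∈ cartanII n := by
  refine ⟨?_, ?_⟩
  · simp only [IsSymm, transpose_mul, transpose_transpose, hA.1.eq, Matrix.mul_assoc]
  · rw [norm_toEuclideanCLM_unitary_mul_mul hU (transpose_mem_unitaryGroup_iff.mpr hU)]
    exact hA.2

lemma balanced_cartanII : Balanced ℂ (cartanII n) := by
  rw [balanced_iff_smul_mem]
  intro a ha A hA
  refine ⟨hA.1.smul a, ?_⟩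
  rw [map_smul, norm_smul]
  exact (mul_le_of_le_one_left (norm_nonneg _) ha).trans_lt hA.2

lemma norm_apply_le_of_mem_cartanII (hF : DifferentiableOn ℂ F (cartanII n))
    (hFD : MapsTo F (cartanII n) (closedBall 0 1)) (hF0 : F 0 = 0) {A : Matrix n n ℂ}
    (hA : A ∈ cartanII n) : ‖F A‖ ≤ ‖toEuclideanCLM (𝕜 := ℂ) A‖ := by
  refine le_of_forall_gt_imp_ge_of_dense fun r hr ↦ ?_
  rcases le_or_gt 1 r with hr1 | hr1
  · exact (mem_closedBall_zero_iff.mp (hFD hA)).trans hr1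
  have hr0 : 0 < r := (norm_nonneg _).trans_lt hr
  have hnorm : ‖(r : ℂ)‖ = r := Complex.norm_of_nonneg hr0.le
  have hmem : (r : ℂ)⁻¹ • A ∈ cartanII n := by
    refine ⟨hA.1.smul _, ?_⟩
    rw [map_smul, norm_smul, norm_inv, hnorm]
    exact (inv_mul_lt_one₀ hr0).mpr hr
  have h := norm_apply_smul_le_of_balanced balanced_cartanII hF hFD hF0 hmem (hnorm.trans_lt hr1)
  rwa [hnorm, smul_inv_smul₀ (ofReal_ne_zero.mpr hr0.ne')] at h

lemma norm_le_norm_toEuclideanCLM_of_leftInvOn (hfR : MapsTo f 𝔻 (cartanII n)) (hf0 : f 0 = 0)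
    (hF : DifferentiableOn ℂ F (cartanII n)) (hFD : MapsTo F (cartanII n) 𝔻)
    (hleft : LeftInvOn F f 𝔻) {z : ℂ} (hz : z ∈ 𝔻) :
    ‖z‖ ≤ ‖toEuclideanCLM (𝕜 := ℂ) (f z)‖ := by
  have hF0 : F 0 = 0 := hf0 ▸ hleft (mem_ball_self one_pos)
  simpa only [hleft hz] using
    norm_apply_le_of_mem_cartanII hF (hFD.mono_right ball_subset_closedBall) hF0 (hfR hz)

lemma norm_toEuclideanCLM_le_norm (hf : DifferentiableOn ℂ f 𝔻) (hfR : MapsTo f 𝔻 (cartanII n))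
    (hf0 : f 0 = 0) {z : ℂ} (hz : z ∈ 𝔻) : ‖toEuclideanCLM (𝕜 := ℂ) (f z)‖ ≤ ‖z‖ :=
  norm_le_norm_of_mapsTo_ball (f := fun z ↦ toEuclideanCLM (𝕜 := ℂ) (f z))
    (differentiable_toEuclideanCLM.comp_differentiableOn hf)
    (fun _ hw ↦ mem_closedBall_zero_iff.mpr (hfR hw).2.le) (by simp [hf0])
    (mem_ball_zero_iff.mp hz)

lemma mulVec_eq_smul_of_mulVec_eq_smul (hf : DifferentiableOn ℂ f 𝔻)
    (hfR : MapsTo f 𝔻 (cartanII n)) (hf0 : f 0 = 0) {z₀ : ℂ} (hz₀ : z₀ ∈ 𝔻) (hz₀_ne : z₀ ≠ 0)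
    {x y : EuclideanSpace ℂ n} (hx : ‖x‖ = 1) (hy : ‖y‖ = 1)
    (hfz₀ : f z₀ *ᵥ y.ofLp = z₀ • x.ofLp) {z : ℂ} (hz : z ∈ 𝔻) :
    f z *ᵥ y.ofLp = z • x.ofLp := by
  have hd : DifferentiableOn ℂ (fun z ↦ toEuclideanCLM (𝕜 := ℂ) (f z) y) 𝔻 :=
    (differentiable_toEuclideanCLM.comp_differentiableOn hf).clm_apply (by fun_prop)
  have hmaps : MapsTo (fun z ↦ toEuclideanCLM (𝕜 := ℂ) (f z) y) 𝔻 (closedBall 0 1) := by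
    intro w hw
    have h := (toEuclideanCLM (𝕜 := ℂ) (f w)).le_opNorm y
    rw [hy, mul_one] at h
    exact mem_closedBall_zero_iff.mpr (h.trans (hfR hw).2.le)
  exact congrArg WithLp.ofLp <| eqOn_smul_of_mapsTo_ball hd hmaps (by simp [hf0]) hz₀ hz₀_ne hx
    (congrArg (WithLp.toLp 2) hfz₀) hz

theorem stmt15_general (i : n) (hf : DifferentiableOn ℂ f 𝔻) (hfR : MapsTo f 𝔻 (cartanII n))
    (hf0 : f 0 = 0) {z₀ : ℂ} (hz₀ : z₀ ∈ 𝔻) (hz₀_ne : z₀ ≠ 0)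
    (hfz₀ : ‖z₀‖ ≤ ‖toEuclideanCLM (𝕜 := ℂ) (f z₀)‖) :
    ∃ U ∈ unitaryGroup n ℂ, ∃ g : ℂ → Matrix n n ℂ, DifferentiableOn ℂ g 𝔻 ∧
      MapsTo g 𝔻 (cartanII n) ∧ g 0 = 0 ∧
        ∀ z ∈ 𝔻, (g z).col i = Pi.single i z ∧ f z = U * g z * Uᵀ := by
  have : Nonempty n := ⟨i⟩
  obtain ⟨x, hx, hfx⟩ := exists_coneigenvector_of_isSymm (hfR hz₀).1
    (hfz₀.antisymm (norm_toEuclideanCLM_le_norm hf hfR hf0 hz₀))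
  have hx' : ‖WithLp.toLp 2 (star x.ofLp)‖ = 1 := by simpa [EuclideanSpace.norm_eq] using hx
  obtain ⟨U, hU, hUx⟩ := exists_unitary_col_eq i hx
  refine ⟨U, hU, fun z ↦ star U * f z * (star U)ᵀ,
    (differentiable_mul_mul (star U) (star U)ᵀ).comp_differentiableOn hf,
    fun z hz ↦ mul_mul_transpose_mem_cartanII (Unitary.star_mem hU) (hfR hz), by simp [hf0],
    fun z hz ↦ ⟨?_, (mul_star_mul_mul_transpose_mul_transpose hU (f z)).symm⟩⟩
  apply col_star_mul_mul_transpose_eq_single hU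
  rw [hUx]
  exact mulVec_eq_smul_of_mulVec_eq_smul hf hfR hf0 hz₀ hz₀_ne hx hx' hfx hz

end CartanDomain

theorem stmt15 (f : ℂ → Matrix (Fin 2) (Fin 2) ℂ)
    (hf : DifferentiableOn ℂ f 𝔻) (hfR : ∀ z ∈ 𝔻, f z ∈ RII) (hf0 : f 0 = 0)
    (F : Matrix (Fin 2) (Fin 2) ℂ → ℂ)
    (hF : DifferentiableOn ℂ F RII) (hFD : ∀ z ∈ RII, F z ∈ 𝔻)
    (hleft : ∀ z ∈ 𝔻, F (f z) = z) :
    ∃ U : Matrix (Fin 2) (Fin 2) ℂ, U ∈ Matrix.unitaryGroup (Fin 2) ℂ ∧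
      ∃ Z : ℂ → ℂ, DifferentiableOn ℂ Z 𝔻 ∧ (∀ z ∈ 𝔻, Z z ∈ 𝔻) ∧ Z 0 = 0 ∧
        ∀ z ∈ 𝔻, f z = U * !![z, 0; 0, Z z] * U.transpose := by
  have hhalf : (1 / 2 : ℂ) ∈ 𝔻 := mem_ball_zero_iff.mpr (by norm_num)
  obtain ⟨U, hU, g, hg, hgR, hg0, hfg⟩ := stmt15_general 0 hf hfR hf0 hhalf (by norm_num)
    (norm_le_norm_toEuclideanCLM_of_leftInvOn hfR hf0 hF hFD hleft hhalf)
  refine ⟨U, hU, fun z ↦ g z 1 1, differentiableOn_pi.mp (differentiableOn_pi.mp hg 1) 1,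
    fun z hz ↦ entry_mem_of_mem_cartanII (hgR hz) 1 1, by simp [hg0], fun z hz ↦ ?_⟩
  rw [(hfg z hz).2, ← eq_diag_fin_two_of_isSymm_of_col (hgR hz).1 (hfg z hz).1]

end
end
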